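/- arXiv:1807.02884 — 2 statements merged into one kernel-verified Lean document; each statement's English description precedes it below -/
import Mathlib

section
/- Suppose α > β > 0 and I(α,β) < 1. Then the maximum-likelihood estimator fails with high probability: p_fail = 1 − o(1) as n → ∞. -/
open Finset Filter Matrix

open scoped Classical

/-- The `k`-element subsets of `[n]`, i.e. the potential hyperedges. -/
abbrev KSet (n k : ℕ) := {e : Finset (Fin n) // e.card = k}

/-- A `±1` label vector (encoded by `Bool`) is balanced if it has equally many
`+1`'s (`true`) and `-1`'s (`false`). -/
abbrev balanced {n : ℕ} (σ : Fin n → Bool) : Prop :=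
  2 * (Finset.univ.filter (fun i => σ i = true)).card = n

/-- `e` is in-cluster w.r.t. `σ`: `σ` is constant on `e`. -/
abbrev inCluster {n : ℕ} (σ : Fin n → Bool) (e : Finset (Fin n)) : Prop :=
  ∀ i ∈ e, ∀ j ∈ e, σ i = σ j

/-- Probability that `e` appears as an edge, given the labels `σ`. -/
noncomputable def edgeP {n : ℕ} (p q : ℝ) (σ : Fin n → Bool) (e : Finset (Fin n)) : ℝ :=
  if inCluster σ e then p else q

/-- Probability of observing exactly the hypergraph with edge-indicator `E`, given labels `σ`
(edges appear independently). -/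
noncomputable def hypProb {n k : ℕ} (p q : ℝ) (σ : Fin n → Bool) (E : KSet n k → Bool) : ℝ :=
  ∏ e : KSet n k, if E e then edgeP p q σ e.1 else 1 - edgeP p q σ e.1

/-- Uniform prior on balanced label vectors. -/
noncomputable def sigProb (n : ℕ) (σ : Fin n → Bool) : ℝ :=
  if balanced σ then 1 / ((Finset.univ.filter (fun τ : Fin n → Bool => balanced τ)).card : ℝ)
  else 0

/-- Probability of an event `P` under the joint law `HSBM(n,p,q;k)` of `(σ, ℋ)`. -/
noncomputable def prEvent (n k : ℕ) (p q : ℝ)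
    (P : (Fin n → Bool) → (KSet n k → Bool) → Prop) : ℝ :=
  ∑ σ : Fin n → Bool, ∑ E : KSet n k → Bool,
    sigProb n σ * hypProb p q σ E * (if P σ E then 1 else 0)

/-- Global sign flip. -/
def negB {n : ℕ} (σ : Fin n → Bool) : Fin n → Bool := fun i => !(σ i)

/-- The edge probability parameter `α · log n / C(n-1, k-1)`. -/
noncomputable def pParam (k : ℕ) (α : ℝ) (n : ℕ) : ℝ :=
  α * Real.log n / ((n - 1).choose (k - 1) : ℝ)

/-- `est` is a maximum-likelihood estimator: for every observed hypergraph it returns a balanced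
label vector maximizing the likelihood over all balanced label vectors. -/
def isMLE {n k : ℕ} (p q : ℝ) (est : (KSet n k → Bool) → (Fin n → Bool)) : Prop :=
  ∀ E : KSet n k → Bool, balanced (est E) ∧
    ∀ x : Fin n → Bool, balanced x → hypProb p q x E ≤ hypProb p q (est E) E

/-! ### Finite product Bernoulli expectations -/

/-- weight of a configuration -/
noncomputable def wt {ι : Type*} [Fintype ι] (w : ι → ℝ) (E : ι → Bool) : ℝ :=
  ∏ e, if E e then w e else 1 - w e

/-- expectation under independent Bernoulli coordinates -/
noncomputable def Ex {ι : Type*} [Fintype ι] (w : ι → ℝ) (f : (ι → Bool) → ℝ) : ℝ :=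
  ∑ E : ι → Bool, wt w E * f E

section ExSec
set_option linter.unusedSectionVars false
variable {ι : Type*} [Fintype ι] (w : ι → ℝ)

lemma Ex_prod (g : ι → Bool → ℝ) :
    Ex w (fun E => ∏ e, g e (E e)) = ∏ e, (w e * g e true + (1 - w e) * g e false) := by
  have h := Finset.prod_univ_sum (fun _ : ι => (Finset.univ : Finset Bool))
    (fun e b => (if b then w e else 1 - w e) * g e b)
  simp only [Fintype.univ_bool, Finset.sum_insert, Finset.mem_singleton, Bool.true_eq_false,
    not_false_eq_true, Finset.sum_singleton, if_true, Bool.false_eq_true, if_false] at h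
  rw [h]
  unfold Ex wt
  rw [show (Fintype.piFinset fun _ : ι => ({true, false} : Finset Bool)) = Finset.univ by
    ext E; simp [Fintype.mem_piFinset]]
  refine Finset.sum_congr rfl fun E _ => ?_
  rw [Finset.prod_mul_distrib]

lemma Ex_one : Ex w (fun _ => 1) = 1 := by
  have := Ex_prod w (fun _ _ => 1)
  simpa using this

lemma wt_sum : ∑ E, wt w E = 1 := by
  simpa [Ex] using Ex_one w

variable {w}

lemma wt_nonneg (hw : ∀ e, 0 ≤ w e ∧ w e ≤ 1) (E : ι → Bool) : 0 ≤ wt w E := by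
  unfold wt
  refine Finset.prod_nonneg fun e _ => ?_
  have := hw e
  split_ifs <;> linarith

lemma Ex_mono (hw : ∀ e, 0 ≤ w e ∧ w e ≤ 1) {f g : (ι → Bool) → ℝ} (h : ∀ E, f E ≤ g E) :
    Ex w f ≤ Ex w g :=
  Finset.sum_le_sum fun E _ => mul_le_mul_of_nonneg_left (h E) (wt_nonneg hw E)

lemma Ex_add (f g : (ι → Bool) → ℝ) : Ex w (fun E => f E + g E) = Ex w f + Ex w g := by
  simp [Ex, mul_add, Finset.sum_add_distrib]

lemma Ex_sub (f g : (ι → Bool) → ℝ) : Ex w (fun E => f E - g E) = Ex w f - Ex w g := by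
  simp [Ex, mul_sub, Finset.sum_sub_distrib]

lemma Ex_sum {κ : Type*} (S : Finset κ) (f : κ → (ι → Bool) → ℝ) :
    Ex w (fun E => ∑ i ∈ S, f i E) = ∑ i ∈ S, Ex w (f i) := by
  simp only [Ex, Finset.mul_sum]
  rw [Finset.sum_comm]

lemma Ex_const_mul (c : ℝ) (f : (ι → Bool) → ℝ) : Ex w (fun E => c * f E) = c * Ex w f := by
  simp only [Ex, Finset.mul_sum]
  exact Finset.sum_congr rfl fun E _ => by ring

/-- `f` depends only on the coordinates in `T` -/
def DepOn {ι : Type*} (f : (ι → Bool) → ℝ) (T : Set ι) : Prop :=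
  ∀ x y, (∀ i ∈ T, x i = y i) → f x = f y

/-- swap coordinates in `T` -/
noncomputable def mixB {ι : Type*} (T : Set ι) (x y : ι → Bool) : ι → Bool :=
  fun i => if i ∈ T then x i else y i

lemma Ex_indep {f g : (ι → Bool) → ℝ} {T : Set ι} (hf : DepOn f T) (hg : DepOn g Tᶜ) :
    Ex w (fun E => f E * g E) = Ex w f * Ex w g := by
  let φ : ((ι → Bool) × (ι → Bool)) → ((ι → Bool) × (ι → Bool)) :=
    fun p => (mixB T p.1 p.2, mixB T p.2 p.1)
  have hφ : Function.Involutive φ := by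
    intro p
    ext i <;> simp only [φ, mixB] <;> split_ifs <;> rfl
  have hw2 : ∀ p, wt w (φ p).1 * wt w (φ p).2 = wt w p.1 * wt w p.2 := by
    intro p
    simp only [wt, ← Finset.prod_mul_distrib]
    refine Finset.prod_congr rfl fun e _ => ?_
    by_cases h : e ∈ T
    · simp [φ, mixB, h]
    · simp [φ, mixB, h, mul_comm]
  have h1 : Ex w f * Ex w g =
      ∑ p : (ι → Bool) × (ι → Bool), wt w p.1 * wt w p.2 * (f p.1 * g p.2) := by
    rw [Ex, Ex, Finset.sum_mul_sum, Fintype.sum_prod_type]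
    exact Finset.sum_congr rfl fun E _ => Finset.sum_congr rfl fun E' _ => by ring
  have h2 : Ex w (fun E => f E * g E) =
      ∑ p : (ι → Bool) × (ι → Bool), wt w p.1 * wt w p.2 * (f p.1 * g p.1) := by
    rw [Fintype.sum_prod_type, Ex]
    refine Finset.sum_congr rfl fun E _ => ?_
    simp only
    rw [← Finset.sum_mul, ← Finset.mul_sum, wt_sum, mul_one]
  rw [h1, h2, ← Equiv.sum_comp hφ.toPerm]
  refine Finset.sum_congr rfl fun p _ => ?_
  simp only [Function.Involutive.coe_toPerm]
  rw [hw2]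
  congr 2
  · exact hf _ _ fun i hi => by simp [φ, mixB, hi]
  · refine hg _ _ fun i hi => ?_
    simp only [φ, mixB]
    rw [if_neg hi]

lemma DepOn.mono {f : (ι → Bool) → ℝ} {T T' : Set ι} (hf : DepOn f T) (h : T ⊆ T') :
    DepOn f T' := fun x y hxy => hf x y fun i hi => hxy i (h hi)

lemma Ex_prod_indep {κ : Type*} (S : Finset κ) (f : κ → (ι → Bool) → ℝ) (D : κ → Set ι)
    (hf : ∀ i ∈ S, DepOn (f i) (D i))
    (hD : ∀ i ∈ S, ∀ j ∈ S, i ≠ j → Disjoint (D i) (D j)) :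
    Ex w (fun E => ∏ i ∈ S, f i E) = ∏ i ∈ S, Ex w (f i) := by
  induction S using Finset.induction_on with
  | empty => simpa using Ex_one w
  | insert a S ha ih =>
    simp only [Finset.prod_insert ha]
    rw [Ex_indep (T := D a) (hf a (Finset.mem_insert_self _ _)), ih]
    · exact fun i hi => hf i (Finset.mem_insert_of_mem hi)
    · exact fun i hi j hj => hD i (Finset.mem_insert_of_mem hi) j (Finset.mem_insert_of_mem hj)
    · intro x y hxy
      refine Finset.prod_congr rfl fun i hi => ?_
      refine hf i (Finset.mem_insert_of_mem hi) x y fun e he => hxy e ?_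
      have hne : i ≠ a := fun h => ha (h ▸ hi)
      have := hD i (Finset.mem_insert_of_mem hi) a (Finset.mem_insert_self _ _) hne
      exact Set.disjoint_left.mp this he

/-- number of open coordinates in `T` -/
noncomputable def cnt {ι : Type*} (T : Finset ι) (E : ι → Bool) : ℕ :=
  (T.filter (fun e => E e = true)).card

lemma cnt_dep (T : Finset ι) (F : ℕ → ℝ) : DepOn (fun E => F (cnt T E)) (T : Set ι) := by
  intro x y hxy
  have : T.filter (fun e => x e = true) = T.filter (fun e => y e = true) :=
    Finset.filter_congr fun e he => by rw [hxy e (by exact_mod_cast he)]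
  simp only [cnt, this]

lemma Ex_binom (T : Finset ι) (p : ℝ) (hp : ∀ e ∈ T, w e = p) (a : ℕ) :
    Ex w (fun E => if cnt T E = a then 1 else 0)
      = (T.card.choose a : ℝ) * p ^ a * (1 - p) ^ (T.card - a) := by
  have h1 : ∀ E : ι → Bool, (if cnt T E = a then (1:ℝ) else 0) =
      ∑ U ∈ T.powersetCard a, ∏ e, (if e ∈ T then (if (E e = true ↔ e ∈ U) then (1:ℝ) else 0) else 1) := by
    intro E
    have h2 : ∀ U ∈ T.powersetCard a,
        (∏ e, (if e ∈ T then (if (E e = true ↔ e ∈ U) then (1:ℝ) else 0) else 1)) =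
        if U = T.filter (fun e => E e = true) then 1 else 0 := by
      intro U hU
      rw [Finset.mem_powersetCard] at hU
      split_ifs with h
      · refine Finset.prod_eq_one fun e _ => ?_
        subst h
        split_ifs with h1 h2
        · rfl
        · exact absurd (by simp [h1]) h2
        · rfl
      · by_contra hne
        apply h
        have := Finset.prod_ne_zero_iff.mp hne
        ext e
        have he := this e (Finset.mem_univ _)
        by_cases heT : e ∈ T
        · rw [if_pos heT] at he
          have : (E e = true ↔ e ∈ U) := by
            by_contra hh
            rw [if_neg hh] at he
            exact he rfl
          simp [heT, this]
        · simp only [Finset.mem_filter, heT, false_and, iff_false]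
          exact fun h => heT (hU.1 h)
    rw [Finset.sum_congr rfl h2, Finset.sum_ite_eq']
    simp [Finset.mem_powersetCard, cnt]
    congr
  simp only [h1]
  rw [Ex_sum]
  have h3 : ∀ U ∈ T.powersetCard a,
      Ex w (fun E => ∏ e, (if e ∈ T then (if (E e = true ↔ e ∈ U) then (1:ℝ) else 0) else 1))
      = p ^ a * (1 - p) ^ (T.card - a) := by
    intro U hU
    rw [Finset.mem_powersetCard] at hU
    rw [Ex_prod w (fun e b => if e ∈ T then (if (b = true ↔ e ∈ U) then (1:ℝ) else 0) else 1)]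
    have h4 : ∀ e, (w e * (if e ∈ T then (if (true = true ↔ e ∈ U) then (1:ℝ) else 0) else 1)
        + (1 - w e) * (if e ∈ T then (if (false = true ↔ e ∈ U) then (1:ℝ) else 0) else 1))
        = (if e ∈ U then p else 1) * (if e ∈ T \ U then 1 - p else 1) := by
      intro e
      by_cases h1 : e ∈ T
      · by_cases h2 : e ∈ U
        · simp [h1, h2, hp e h1]
        · simp [h1, h2, hp e h1]
      · have h2 : e ∉ U := fun h => h1 (hU.1 h)
        simp [h1, h2]
    rw [Finset.prod_congr rfl fun e _ => h4 e, Finset.prod_mul_distrib, Finset.prod_ite_mem,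
      Finset.prod_ite_mem]
    simp [Finset.card_sdiff_of_subset hU.1, hU.2]
  rw [Finset.sum_congr rfl h3]
  simp [mul_assoc]

/-- Chernoff upper tail -/
lemma Ex_tail (hw : ∀ e, 0 ≤ w e ∧ w e ≤ 1) (T : Finset ι) (p : ℝ) (hp : ∀ e ∈ T, w e ≤ p)
    (t x : ℝ) (ht : 0 ≤ t) :
    Ex w (fun E => if x ≤ (cnt T E : ℝ) then 1 else 0)
      ≤ Real.exp (- (t * x) + T.card * p * Real.exp t) := by
  have h1 : ∀ E : ι → Bool, (if x ≤ (cnt T E : ℝ) then (1:ℝ) else 0) ≤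
      Real.exp (-(t * x)) * ∏ e, (if e ∈ T then (if E e = true then Real.exp t else 1) else 1) := by
    intro E
    have h2 : ∏ e, (if e ∈ T then (if E e = true then Real.exp t else 1) else 1)
        = Real.exp (t * cnt T E) := by
      rw [Finset.prod_ite_mem, Finset.univ_inter, ← Finset.prod_filter]
      simp [cnt, mul_comm t, Real.exp_nat_mul]
    rw [h2, ← Real.exp_add]
    split_ifs with h
    · apply Real.one_le_exp
      nlinarith
    · positivity
  refine (Ex_mono hw h1).trans ?_
  rw [Ex_const_mul, Ex_prod w (fun e b => if e ∈ T then (if b = true then Real.exp t else 1) else 1),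
    Real.exp_add]
  refine mul_le_mul_of_nonneg_left ?_ (Real.exp_pos _).le
  have h3 : ∀ e, (w e * (if e ∈ T then (if true = true then Real.exp t else 1) else 1)
        + (1 - w e) * (if e ∈ T then (if false = true then Real.exp t else 1) else 1))
        = if e ∈ T then (w e * Real.exp t + (1 - w e)) else 1 := by
    intro e
    by_cases h : e ∈ T <;> simp [h]
  rw [Finset.prod_congr rfl fun e _ => h3 e, Finset.prod_ite_mem, Finset.univ_inter]
  have h4 : ∀ e ∈ T, w e * Real.exp t + (1 - w e) ≤ Real.exp (p * Real.exp t) := by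
    intro e he
    have := hp e he
    have h0 := hw e
    have h5 := Real.add_one_le_exp (p * Real.exp t)
    have h6 := Real.exp_pos t
    nlinarith
  refine (Finset.prod_le_prod ?_ h4).trans ?_
  · intro e he
    have h0 := hw e
    have h6 := Real.exp_pos t
    nlinarith [mul_nonneg h0.1 h6.le]
  · rw [Finset.prod_const, ← Real.exp_nat_mul]
    apply le_of_eq; ring_nf

end ExSec

/-! ### Combinatorics of the swap -/

section Comb

lemma sum_in_perm {n k : ℕ} (σ : Fin n → Bool) (π : Equiv.Perm (Fin n)) :
    ∑ e : KSet n k, (if inCluster (fun i => σ (π i)) e.1 then (1:ℝ) else 0)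
      = ∑ e : KSet n k, (if inCluster σ e.1 then (1:ℝ) else 0) := by
  let φ : KSet n k ≃ KSet n k :=
    Equiv.subtypeEquiv (Equiv.finsetCongr π) (fun e => by simp [Equiv.finsetCongr_apply])
  rw [← Equiv.sum_comp φ (fun e : KSet n k => if inCluster σ e.1 then (1:ℝ) else 0)]
  refine Finset.sum_congr rfl fun e _ => ?_
  have : inCluster (fun i => σ (π i)) e.1 ↔ inCluster σ (φ e).1 := by
    have hφ : (φ e).1 = e.1.map π.toEmbedding := rfl
    rw [hφ]
    unfold inCluster
    simp only [Finset.mem_map, Equiv.coe_toEmbedding, forall_exists_index, and_imp,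
      forall_apply_eq_imp_iff₂]
  simp only [this]

lemma balanced_perm {n : ℕ} (σ : Fin n → Bool) (π : Equiv.Perm (Fin n)) (h : balanced σ) :
    balanced (fun i => σ (π i)) := by
  unfold balanced at *
  refine Eq.trans ?_ h
  congr 1
  refine Finset.card_bij (fun i _ => π i) ?_ ?_ ?_
  · intro i hi; simpa using hi
  · intro i _ j _ hij; exact π.injective hij
  · intro j hj; exact ⟨π.symm j, by simpa using hj, by simp⟩

lemma hypProb_eq_exp {n k : ℕ} {p q : ℝ} (hq : 0 < q) (hqp : q < p) (hp : p < 1)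
    (x : Fin n → Bool) (E : KSet n k → Bool) :
    hypProb p q x E = Real.exp ((∑ e : KSet n k, if E e then Real.log q else Real.log (1 - q))
      + (Real.log (1 - p) - Real.log (1 - q)) *
          (∑ e : KSet n k, (if inCluster x e.1 then (1:ℝ) else 0))
      + (Real.log p - Real.log q - (Real.log (1 - p) - Real.log (1 - q))) *
          (∑ e : KSet n k, (if E e ∧ inCluster x e.1 then (1:ℝ) else 0))) := by
  rw [Finset.mul_sum, Finset.mul_sum, ← Finset.sum_add_distrib, ← Finset.sum_add_distrib,
    Real.exp_sum]
  unfold hypProb edgeP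
  refine Finset.prod_congr rfl fun e _ => ?_
  have e1 : Real.exp (Real.log p) = p := Real.exp_log (by linarith)
  have e2 : Real.exp (Real.log q) = q := Real.exp_log (by linarith)
  have e3 : Real.exp (Real.log (1 - p)) = 1 - p := Real.exp_log (by linarith)
  have e4 : Real.exp (Real.log (1 - q)) = 1 - q := Real.exp_log (by linarith)
  by_cases hE : E e = true <;> by_cases hx : inCluster x e.1
  · rw [if_pos hE, if_pos hE, if_pos hx, if_pos hx, if_pos ⟨hE, hx⟩]
    rw [← e1]; congr 1; simp only [e1]; ring
  · rw [if_pos hE, if_pos hE, if_neg hx, if_neg hx, if_neg (fun h => hx h.2)]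
    rw [← e2]; congr 1; simp only [e2]; ring
  · rw [if_neg hE, if_neg hE, if_pos hx, if_pos hx, if_neg (fun h => hE h.1)]
    rw [← e3]; congr 1; simp only [e3]; ring
  · rw [if_neg hE, if_neg hE, if_neg hx, if_neg hx, if_neg (fun h => hE h.1)]
    rw [← e4]; congr 1; simp only [e4]; ring

lemma hypProb_lt {n k : ℕ} {p q : ℝ} (hq : 0 < q) (hqp : q < p) (hp : p < 1)
    (σ : Fin n → Bool) (π : Equiv.Perm (Fin n)) (E : KSet n k → Bool)
    (h : (∑ e : KSet n k, (if E e ∧ inCluster σ e.1 then (1:ℝ) else 0)) <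
      ∑ e : KSet n k, (if E e ∧ inCluster (fun i => σ (π i)) e.1 then (1:ℝ) else 0)) :
    hypProb p q σ E < hypProb p q (fun i => σ (π i)) E := by
  rw [hypProb_eq_exp hq hqp hp, hypProb_eq_exp hq hqp hp, sum_in_perm, Real.exp_lt_exp]
  have h1 : Real.log q < Real.log p := Real.log_lt_log hq hqp
  have h2 : Real.log (1 - p) < Real.log (1 - q) := Real.log_lt_log (by linarith) (by linarith)
  have h3 := mul_lt_mul_of_pos_left h
    (show 0 < Real.log p - Real.log q - (Real.log (1 - p) - Real.log (1 - q)) by linarith)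
  linarith

lemma hypProb_neg {n k : ℕ} (p q : ℝ) (σ : Fin n → Bool) (E : KSet n k → Bool) :
    hypProb p q (negB σ) E = hypProb p q σ E := by
  unfold hypProb edgeP
  have : ∀ e : Finset (Fin n), inCluster (negB σ) e ↔ inCluster σ e := by
    intro e; simp [inCluster, negB]
  simp only [this]

/-- edges through `i` whose other vertices are in `R` -/
noncomputable def Dset (n k : ℕ) (i : Fin n) (R : Finset (Fin n)) : Finset (KSet n k) :=
  Finset.univ.filter (fun e => i ∈ e.1 ∧ ∀ l ∈ e.1, l ≠ i → l ∈ R)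

lemma Dset_card {n k : ℕ} (hk : 1 ≤ k) (i : Fin n) (R : Finset (Fin n)) (hi : i ∉ R) :
    (Dset n k i R).card = R.card.choose (k - 1) := by
  rw [← Finset.card_powersetCard]
  refine Finset.card_bij (fun e _ => e.1.erase i) ?_ ?_ ?_
  · intro e he
    simp only [Dset, Finset.mem_filter, Finset.mem_univ, true_and] at he
    rw [Finset.mem_powersetCard]
    refine ⟨fun l hl => ?_, ?_⟩
    · rw [Finset.mem_erase] at hl
      exact he.2 l hl.2 hl.1
    · rw [Finset.card_erase_of_mem he.1, e.2]
  · intro e he e' he' h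
    simp only [Dset, Finset.mem_filter, Finset.mem_univ, true_and] at he he'
    apply Subtype.ext
    rw [← Finset.insert_erase he.1, ← Finset.insert_erase he'.1]
    rw [h]
  · intro U hU
    rw [Finset.mem_powersetCard] at hU
    have hiU : i ∉ U := fun h => hi (hU.1 h)
    refine ⟨⟨insert i U, by rw [Finset.card_insert_of_notMem hiU, hU.2]; omega⟩, ?_, ?_⟩
    · simp only [Dset, Finset.mem_filter, Finset.mem_univ, true_and]
      refine ⟨Finset.mem_insert_self _ _, fun l hl hne => ?_⟩
      rcases Finset.mem_insert.mp hl with h | h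
      · exact absurd h hne
      · exact hU.1 h
    · simp [hiU]

/-- edges through `i` and another vertex of `S` -/
noncomputable def Wset (n k : ℕ) (i : Fin n) (S : Finset (Fin n)) : Finset (KSet n k) :=
  Finset.univ.filter (fun e => i ∈ e.1 ∧ ∃ l ∈ e.1, l ≠ i ∧ l ∈ S)

lemma Wset_card {n k : ℕ} (i : Fin n) (S : Finset (Fin n)) :
    (Wset n k i S).card ≤ S.card * (n - 2).choose (k - 2) := by
  have h1 : Wset n k i S ⊆ (S.erase i).biUnion
      (fun l => Finset.univ.filter (fun e : KSet n k => i ∈ e.1 ∧ l ∈ e.1)) := by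
    intro e he
    simp only [Wset, Finset.mem_filter, Finset.mem_univ, true_and] at he
    obtain ⟨hi, l, hl, hne, hS⟩ := he
    rw [Finset.mem_biUnion]
    exact ⟨l, Finset.mem_erase.mpr ⟨hne, hS⟩, by simp [hi, hl]⟩
  refine (Finset.card_le_card h1).trans ?_
  refine (Finset.card_biUnion_le_card_mul _ _ ((n - 2).choose (k - 2)) ?_).trans
    (Nat.mul_le_mul_right _ (Finset.card_le_card (Finset.erase_subset _ _)))
  intro l hl
  have hne : l ≠ i := (Finset.mem_erase.mp hl).1
  have hc : ((Finset.univ.erase i).erase l).card = n - 2 := by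
    rw [Finset.card_erase_of_mem (by simp [hne]), Finset.card_erase_of_mem (by simp)]
    simp; omega
  rw [← hc, ← Finset.card_powersetCard]
  refine Finset.card_le_card_of_injOn (fun e => (e.1.erase i).erase l) ?_ ?_
  · intro e he
    simp only [Finset.coe_filter, Finset.mem_univ, true_and, Set.mem_ofPred_eq] at he
    rw [Finset.mem_coe, Finset.mem_powersetCard]
    refine ⟨fun x hx => by simp only [Finset.mem_erase] at hx; simp [hx.1, hx.2.1], ?_⟩
    rw [Finset.card_erase_of_mem (by simp [hne, he.2]), Finset.card_erase_of_mem he.1, e.2]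
    omega
  · intro e he e' he' h
    simp only [Finset.coe_filter, Finset.mem_univ, true_and, Set.mem_ofPred_eq] at he he'
    apply Subtype.ext
    simp only at h
    have a1 : e.1 = insert i (insert l ((e.1.erase i).erase l)) := by
      rw [Finset.insert_erase (by simp [hne, he.2]), Finset.insert_erase he.1]
    have a2 : e'.1 = insert i (insert l ((e'.1.erase i).erase l)) := by
      rw [Finset.insert_erase (by simp [hne, he'.2]), Finset.insert_erase he'.1]
    rw [a1, a2, h]

lemma swap_pointwise {n k : ℕ} (hk : 2 ≤ k) (σ : Fin n → Bool) (S : Finset (Fin n))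
    (i j : Fin n) (hi : i ∈ S) (hj : j ∈ S) (hσi : σ i = true) (hσj : σ j = false)
    (RT RF : Finset (Fin n)) (hRT : ∀ l, l ∈ RT ↔ σ l = true ∧ l ∉ S)
    (hRF : ∀ l, l ∈ RF ↔ σ l = false ∧ l ∉ S) (e : KSet n k) :
    (if e ∈ Dset n k i RF then (1:ℝ) else 0) + (if e ∈ Dset n k j RT then (1:ℝ) else 0)
      + (if inCluster σ e.1 then (1:ℝ) else 0)
    ≤ (if inCluster (fun l => σ (Equiv.swap i j l)) e.1 then (1:ℝ) else 0)
      + (if e ∈ Dset n k i RT then (1:ℝ) else 0) + (if e ∈ Dset n k j RF then (1:ℝ) else 0)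
      + (if e ∈ Wset n k i S then (1:ℝ) else 0) + (if e ∈ Wset n k j S then (1:ℝ) else 0) := by
  have hij : i ≠ j := by rintro rfl; simp [hσi] at hσj
  have b1 : ∀ (P : Prop) [Decidable P], (0:ℝ) ≤ if P then 1 else 0 :=
    fun P _ => by split_ifs <;> norm_num
  have key1 : ∀ a b : Fin n, a ≠ b → b ∈ S → ∀ R : Finset (Fin n), (∀ l ∈ R, l ∉ S) →
      e ∈ Dset n k a R → b ∉ e.1 := by
    intro a b hab hb R hR he hbe
    simp only [Dset, Finset.mem_filter, Finset.mem_univ, true_and] at he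
    exact hR b (he.2 b hbe (Ne.symm hab)) hb
  -- a vertex of `e` other than `a`
  have key2 : ∀ a : Fin n, ∃ l ∈ e.1, l ≠ a := by
    intro a
    exact Finset.exists_mem_ne (by rw [e.2]; omega) a
  have hRTS : ∀ l ∈ RT, l ∉ S := fun l hl => ((hRT l).1 hl).2
  have hRFS : ∀ l ∈ RF, l ∉ S := fun l hl => ((hRF l).1 hl).2
  by_cases h1 : e ∈ Dset n k i RF
  · have hje := key1 i j hij hj RF hRFS h1
    have h2 : e ∉ Dset n k j RT := by
      intro h; simp only [Dset, Finset.mem_filter, Finset.mem_univ, true_and] at h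
      exact hje h.1
    simp only [Dset, Finset.mem_filter, Finset.mem_univ, true_and] at h1
    have h3 : ¬ inCluster σ e.1 := by
      intro h
      obtain ⟨l, hl, hne⟩ := key2 i
      have := h l hl i h1.1
      rw [((hRF l).1 (h1.2 l hl hne)).1, hσi] at this
      exact absurd this (by simp)
    have h4 : inCluster (fun l => σ (Equiv.swap i j l)) e.1 := by
      have : ∀ l ∈ e.1, σ (Equiv.swap i j l) = false := by
        intro l hl
        by_cases hli : l = i
        · simp [hli, hσj]
        · have hlj : l ≠ j := fun h => hje (h ▸ hl)
          rw [Equiv.swap_apply_of_ne_of_ne hli hlj]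
          exact ((hRF l).1 (h1.2 l hl hli)).1
      intro a ha b hb
      simp only [this a ha, this b hb]
    rw [if_neg h2, if_neg h3, if_pos h4]
    have := b1 (e ∈ Dset n k i RT)
    have := b1 (e ∈ Dset n k j RF)
    have := b1 (e ∈ Wset n k i S)
    have := b1 (e ∈ Wset n k j S)
    split_ifs <;> linarith
  by_cases h2 : e ∈ Dset n k j RT
  · have hie := key1 j i hij.symm hi RT hRTS h2
    rw [if_neg h1]
    simp only [Dset, Finset.mem_filter, Finset.mem_univ, true_and] at h2
    have h3 : ¬ inCluster σ e.1 := by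
      intro h
      obtain ⟨l, hl, hne⟩ := key2 j
      have := h l hl j h2.1
      rw [((hRT l).1 (h2.2 l hl hne)).1, hσj] at this
      exact absurd this (by simp)
    have h4 : inCluster (fun l => σ (Equiv.swap i j l)) e.1 := by
      have : ∀ l ∈ e.1, σ (Equiv.swap i j l) = true := by
        intro l hl
        by_cases hlj : l = j
        · simp [hlj, hσi]
        · have hli : l ≠ i := fun h => hie (h ▸ hl)
          rw [Equiv.swap_apply_of_ne_of_ne hli hlj]
          exact ((hRT l).1 (h2.2 l hl hlj)).1
      intro a ha b hb
      simp only [this a ha, this b hb]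
    rw [if_neg h3, if_pos h4]
    have := b1 (e ∈ Dset n k i RT)
    have := b1 (e ∈ Dset n k j RF)
    have := b1 (e ∈ Wset n k i S)
    have := b1 (e ∈ Wset n k j S)
    split_ifs <;> linarith
  rw [if_neg h1, if_neg h2]
  have c1 := b1 (e ∈ Dset n k i RT)
  have c2 := b1 (e ∈ Dset n k j RF)
  have c3 := b1 (e ∈ Wset n k i S)
  have c4 := b1 (e ∈ Wset n k j S)
  have c5 := b1 (inCluster (fun l => σ (Equiv.swap i j l)) e.1)
  by_cases h3 : inCluster σ e.1
  swap
  · rw [if_neg h3]; linarith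
  rw [if_pos h3]
  by_cases hie : i ∈ e.1
  · by_cases hW : e ∈ Wset n k i S
    · rw [if_pos hW]; linarith
    · have : e ∈ Dset n k i RT := by
        simp only [Dset, Wset, Finset.mem_filter, Finset.mem_univ, true_and] at hW ⊢
        refine ⟨hie, fun l hl hne => (hRT l).2 ⟨?_, fun hS => hW ⟨hie, l, hl, hne, hS⟩⟩⟩
        rw [h3 l hl i hie, hσi]
      rw [if_pos this]; linarith
  by_cases hje : j ∈ e.1
  · by_cases hW : e ∈ Wset n k j S
    · rw [if_pos hW]; linarith
    · have : e ∈ Dset n k j RF := by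
        simp only [Dset, Wset, Finset.mem_filter, Finset.mem_univ, true_and] at hW ⊢
        refine ⟨hje, fun l hl hne => (hRF l).2 ⟨?_, fun hS => hW ⟨hje, l, hl, hne, hS⟩⟩⟩
        rw [h3 l hl j hje, hσj]
      rw [if_pos this]; linarith
  have h4 : inCluster (fun l => σ (Equiv.swap i j l)) e.1 := by
    intro a ha b hb
    have hh : ∀ l ∈ e.1, Equiv.swap i j l = l := fun l hl =>
      Equiv.swap_apply_of_ne_of_ne (fun h => hie (h ▸ hl)) (fun h => hje (h ▸ hl))
    simp only [hh a ha, hh b hb]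
    exact h3 a ha b hb
  rw [if_pos h4]; linarith

lemma cnt_eq_sum {ι : Type*} [Fintype ι] [DecidableEq ι] (T : Finset ι) (E : ι → Bool) :
    (cnt T E : ℝ) = ∑ e, (if E e then (if e ∈ T then (1:ℝ) else 0) else 0) := by
  rw [cnt, Finset.card_filter]
  push_cast
  rw [← Finset.sum_filter, ← Finset.sum_filter, ← Finset.sum_filter]
  congr 1
  ext e; simp [and_comm]

lemma swap_sum {n k : ℕ} (hk : 2 ≤ k) (σ : Fin n → Bool) (S : Finset (Fin n))
    (i j : Fin n) (hi : i ∈ S) (hj : j ∈ S) (hσi : σ i = true) (hσj : σ j = false)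
    (RT RF : Finset (Fin n)) (hRT : ∀ l, l ∈ RT ↔ σ l = true ∧ l ∉ S)
    (hRF : ∀ l, l ∈ RF ↔ σ l = false ∧ l ∉ S) (E : KSet n k → Bool) :
    (cnt (Dset n k i RF) E : ℝ) + cnt (Dset n k j RT) E
      + ∑ e : KSet n k, (if E e ∧ inCluster σ e.1 then (1:ℝ) else 0)
    ≤ (∑ e : KSet n k, (if E e ∧ inCluster (fun l => σ (Equiv.swap i j l)) e.1 then (1:ℝ) else 0))
      + cnt (Dset n k i RT) E + cnt (Dset n k j RF) E
      + cnt (Wset n k i S) E + cnt (Wset n k j S) E := by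
  simp only [cnt_eq_sum, ← Finset.sum_add_distrib]
  refine Finset.sum_le_sum fun e _ => ?_
  by_cases hE : E e = true
  · simp only [hE, if_true, true_and]
    exact swap_pointwise hk σ S i j hi hj hσi hσj RT RF hRT hRF e
  · simp [hE]

end Comb

/-! ### Failure bound for a fixed labelling -/

section FailBound

lemma edgeP_bounds {n k : ℕ} {p q : ℝ} (hq : 0 < q) (hqp : q < p) (hp : p < 1)
    (σ : Fin n → Bool) (e : KSet n k) : 0 ≤ edgeP p q σ e.1 ∧ edgeP p q σ e.1 ≤ 1 := by
  unfold edgeP; split_ifs <;> constructor <;> linarith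

lemma Ex_hyp {n k : ℕ} (p q : ℝ) (σ : Fin n → Bool) (f : (KSet n k → Bool) → ℝ) :
    Ex (fun e : KSet n k => edgeP p q σ e.1) f = ∑ E, hypProb p q σ E * f E := by
  unfold Ex
  have h : ∀ E : KSet n k → Bool, wt (fun e : KSet n k => edgeP p q σ e.1) E = hypProb p q σ E :=
    fun E => by unfold wt hypProb; rfl
  simp only [h]
  refine Finset.sum_congr ?_ fun E _ => rfl
  ext E
  simp only [Finset.mem_univ]

lemma good_prob {n k : ℕ} (hk : 2 ≤ k) {p q : ℝ} (σ : Fin n → Bool) (S Rs Ro : Finset (Fin n))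
    (c : Bool) (hRs : ∀ l, l ∈ Rs ↔ σ l = c ∧ l ∉ S) (hRo : ∀ l, l ∈ Ro ↔ σ l = !c ∧ l ∉ S)
    (M : ℕ) (hMs : Rs.card = M) (hMo : Ro.card = M) (a b : ℕ) (i : Fin n) (hi : i ∈ S)
    (hσ : σ i = c) :
    Ex (fun e : KSet n k => edgeP p q σ e.1) (fun E =>
      (if cnt (Dset n k i Rs) E = a then (1:ℝ) else 0)
        * (if cnt (Dset n k i Ro) E = b then (1:ℝ) else 0))
      = (((M.choose (k - 1)).choose a : ℝ) * p ^ a * (1 - p) ^ (M.choose (k - 1) - a))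
        * (((M.choose (k - 1)).choose b : ℝ) * q ^ b * (1 - q) ^ (M.choose (k - 1) - b)) := by
  have hne : ∀ e : KSet n k, ∃ l ∈ e.1, l ≠ i := fun e =>
    Finset.exists_mem_ne (by rw [e.2]; omega) i
  have h1 := cnt_dep (Dset n k i Rs) (fun x => if x = a then (1:ℝ) else 0)
  have h2 := cnt_dep (Dset n k i Ro) (fun x => if x = b then (1:ℝ) else 0)
  have hdis : ((Dset n k i Ro : Finset (KSet n k)) : Set (KSet n k)) ⊆
      ((Dset n k i Rs : Finset (KSet n k)) : Set (KSet n k))ᶜ := by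
    intro e he hs
    simp only [Dset, Finset.coe_filter, Finset.mem_univ, true_and, Set.mem_ofPred_eq] at he hs
    obtain ⟨l, hl, hli⟩ := hne e
    have a1 := ((hRs l).1 (hs.2 l hl hli)).1
    have a2 := ((hRo l).1 (he.2 l hl hli)).1
    rw [a1] at a2
    cases c <;> simp at a2
  rw [Ex_indep h1 (h2.mono hdis)]
  rw [Ex_binom (Dset n k i Rs) p ?_ a, Ex_binom (Dset n k i Ro) q ?_ b,
    Dset_card (by omega) i Rs (fun h => ((hRs i).1 h).2 hi),
    Dset_card (by omega) i Ro (fun h => ((hRo i).1 h).2 hi), hMs, hMo]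
  · intro e he
    simp only [Dset, Finset.mem_filter, Finset.mem_univ, true_and] at he
    obtain ⟨l, hl, hli⟩ := hne e
    have a2 := ((hRo l).1 (he.2 l hl hli)).1
    unfold edgeP
    rw [if_neg]
    intro h
    have := h l hl i he.1
    rw [a2, hσ] at this
    cases c <;> simp at this
  · intro e he
    simp only [Dset, Finset.mem_filter, Finset.mem_univ, true_and] at he
    unfold edgeP
    rw [if_pos]
    have : ∀ l ∈ e.1, σ l = c := by
      intro l hl
      by_cases h : l = i
      · rw [h, hσ]
      · exact ((hRs l).1 (he.2 l hl h)).1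
    intro x hx y hy
    rw [this x hx, this y hy]

lemma none_good {n k : ℕ} (hk : 2 ≤ k) {p q : ℝ} (hq : 0 < q) (hqp : q < p) (hp : p < 1)
    (σ : Fin n → Bool) (S S' Rs Ro : Finset (Fin n)) (hS' : S' ⊆ S)
    (c : Bool) (hRs : ∀ l, l ∈ Rs ↔ σ l = c ∧ l ∉ S) (hRo : ∀ l, l ∈ Ro ↔ σ l = !c ∧ l ∉ S)
    (M : ℕ) (hMs : Rs.card = M) (hMo : Ro.card = M) (a b : ℕ)
    (hσ : ∀ i ∈ S', σ i = c) (P : ℝ)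
    (hP : P = (((M.choose (k - 1)).choose a : ℝ) * p ^ a * (1 - p) ^ (M.choose (k - 1) - a))
        * (((M.choose (k - 1)).choose b : ℝ) * q ^ b * (1 - q) ^ (M.choose (k - 1) - b))) :
    Ex (fun e : KSet n k => edgeP p q σ e.1) (fun E => ∏ i ∈ S',
      (1 - (if cnt (Dset n k i Rs) E = a then (1:ℝ) else 0)
        * (if cnt (Dset n k i Ro) E = b then (1:ℝ) else 0))) ≤ Real.exp (-(S'.card * P)) := by
  have hw := edgeP_bounds (k := k) hq hqp hp σ
  rw [Ex_prod_indep S' _ (fun i => {e : KSet n k | i ∈ e.1 ∧ ∀ l ∈ e.1, l ≠ i → l ∉ S})]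
  · have h1 : ∀ i ∈ S', Ex (fun e : KSet n k => edgeP p q σ e.1) (fun E =>
        (1 - (if cnt (Dset n k i Rs) E = a then (1:ℝ) else 0)
        * (if cnt (Dset n k i Ro) E = b then (1:ℝ) else 0))) = 1 - P := by
      intro i hi
      rw [Ex_sub, Ex_one, good_prob hk σ S Rs Ro c hRs hRo M hMs hMo a b i (hS' hi) (hσ i hi), hP]
    rw [Finset.prod_congr rfl h1, Finset.prod_const]
    rcases S'.eq_empty_or_nonempty with h0 | ⟨i, hi⟩
    · simp [h0]
    · have h2 : 0 ≤ 1 - P := by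
        rw [← h1 i hi]
        have := Ex_mono hw (f := fun _ => 0) (g := fun E =>
          (1 - (if cnt (Dset n k i Rs) E = a then (1:ℝ) else 0)
          * (if cnt (Dset n k i Ro) E = b then (1:ℝ) else 0))) (fun E => by
            split_ifs <;> norm_num)
        refine le_trans (le_of_eq ?_) this
        simp [Ex]
      calc (1 - P) ^ S'.card ≤ (Real.exp (-P)) ^ S'.card := by
            refine pow_le_pow_left₀ h2 ?_ _
            have := Real.add_one_le_exp (-P); linarith
        _ = _ := by rw [← Real.exp_nat_mul]; congr 1; ring
  · intro i hi x y hxy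
    have hd : ∀ R : Finset (Fin n), (∀ l ∈ R, l ∉ S) →
        cnt (Dset n k i R) x = cnt (Dset n k i R) y := by
      intro R hR
      have := cnt_dep (Dset n k i R) (fun z => (z:ℝ)) x y (fun e he => hxy e (by
        simp only [Dset, Finset.coe_filter, Finset.mem_univ, true_and, Set.mem_ofPred_eq] at he
        exact ⟨he.1, fun l hl hne => hR l (he.2 l hl hne)⟩))
      simpa using this
    simp only
    rw [hd Rs fun l hl => ((hRs l).1 hl).2, hd Ro fun l hl => ((hRo l).1 hl).2]
  · intro i hi j hj hij
    rw [Set.disjoint_left]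
    intro e he he'
    exact he.2 j he'.1 hij.symm (hS' hj)

lemma fail_bound {m k s a b : ℕ} (hk : 2 ≤ k) {p q : ℝ} (hq : 0 < q) (hqp : q < p) (hp : p < 1)
    (σ : Fin (2 * m) → Bool) (hσ : balanced σ) (hs : s ≤ m) (t x : ℝ) (ht : 0 ≤ t)
    (hx : (a:ℝ) + x ≤ b) (N : ℕ) (hN : N = (m - s).choose (k - 1)) (P : ℝ)
    (hP : P = ((N.choose a : ℝ) * p ^ a * (1 - p) ^ (N - a))
        * ((N.choose b : ℝ) * q ^ b * (1 - q) ^ (N - b)))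
    (est : (KSet (2 * m) k → Bool) → (Fin (2 * m) → Bool)) (hest : isMLE p q est) :
    1 - (2 * Real.exp (-(s * P)) + 2 * s * Real.exp (-(t * x) +
        (2 * s * (2 * m - 2).choose (k - 2) : ℕ) * p * Real.exp t)) ≤
      ∑ E : KSet (2 * m) k → Bool, hypProb p q σ E *
        (if est E ≠ σ ∧ est E ≠ negB σ then 1 else 0) := by
  have hcT : (Finset.univ.filter (fun i => σ i = true)).card = m := by
    have := hσ; unfold balanced at this; omega
  have hcF : (Finset.univ.filter (fun i => σ i = false)).card = m := by
    have h := Finset.card_filter_add_card_filter_not (s := (Finset.univ : Finset (Fin (2 * m))))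
      (fun i => σ i = true)
    simp only [Bool.not_eq_true, Finset.card_univ, Fintype.card_fin] at h
    omega
  obtain ⟨ST, hST, hSTc⟩ := Finset.exists_subset_card_eq (hs.trans hcT.ge)
  obtain ⟨SF, hSF, hSFc⟩ := Finset.exists_subset_card_eq (hs.trans hcF.ge)
  have hSTσ : ∀ i ∈ ST, σ i = true := fun i hi => by simpa using hST hi
  have hSFσ : ∀ i ∈ SF, σ i = false := fun i hi => by simpa using hSF hi
  set S := ST ∪ SF with hS
  set RT := (Finset.univ.filter (fun i => σ i = true)) \ ST with hRTd
  set RF := (Finset.univ.filter (fun i => σ i = false)) \ SF with hRFd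
  have hRTc : RT.card = m - s := by rw [hRTd, Finset.card_sdiff_of_subset hST, hcT, hSTc]
  have hRFc : RF.card = m - s := by rw [hRFd, Finset.card_sdiff_of_subset hSF, hcF, hSFc]
  have hRT : ∀ l, l ∈ RT ↔ σ l = true ∧ l ∉ S := by
    intro l
    simp only [hRTd, hS, Finset.mem_sdiff, Finset.mem_filter, Finset.mem_univ, true_and,
      Finset.mem_union, not_or]
    constructor
    · rintro ⟨h1, h2⟩
      exact ⟨h1, h2, fun h => by simp [hSFσ l h] at h1⟩
    · rintro ⟨h1, h2, -⟩; exact ⟨h1, h2⟩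
  have hRF : ∀ l, l ∈ RF ↔ σ l = false ∧ l ∉ S := by
    intro l
    simp only [hRFd, hS, Finset.mem_sdiff, Finset.mem_filter, Finset.mem_univ, true_and,
      Finset.mem_union, not_or]
    constructor
    · rintro ⟨h1, h2⟩
      exact ⟨h1, fun h => by simp [hSTσ l h] at h1, h2⟩
    · rintro ⟨h1, -, h2⟩; exact ⟨h1, h2⟩
  have hScard : S.card ≤ 2 * s := by
    calc S.card ≤ ST.card + SF.card := Finset.card_union_le _ _
      _ = 2 * s := by rw [hSTc, hSFc]; ring
  set w : KSet (2 * m) k → ℝ := fun e => edgeP p q σ e.1 with hwd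
  have hw := edgeP_bounds (k := k) hq hqp hp σ
  have e1 := none_good (k := k) hk hq hqp hp σ S ST RT RF Finset.subset_union_left true hRT
    (by simpa using hRF) (m - s) hRTc hRFc a b hSTσ P (by rw [hP, hN])
  have e2 := none_good (k := k) hk hq hqp hp σ S SF RF RT Finset.subset_union_right false hRF
    (by simpa using hRT) (m - s) hRFc hRTc a b hSFσ P (by rw [hP, hN])
  rw [hSTc] at e1
  rw [hSFc] at e2
  have hx2 : ∀ i, Ex w (fun E => if x ≤ (cnt (Wset (2 * m) k i S) E : ℝ) then 1 else 0) ≤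
      Real.exp (-(t * x) + (2 * s * (2 * m - 2).choose (k - 2) : ℕ) * p * Real.exp t) := by
    intro i
    refine (Ex_tail hw (Wset (2 * m) k i S) p ?_ t x ht).trans ?_
    · intro e _
      unfold edgeP; split_ifs <;> linarith
    · apply Real.exp_le_exp.mpr
      have : ((Wset (2 * m) k i S).card : ℝ) ≤ (2 * s * (2 * m - 2).choose (k - 2) : ℕ) := by
        exact_mod_cast (Wset_card i S).trans (Nat.mul_le_mul_right _ hScard)
      have hp0 : 0 < p := by linarith
      gcongr
  have e3 : Ex w (fun E => ∑ i ∈ S, if x ≤ (cnt (Wset (2 * m) k i S) E : ℝ) then 1 else 0) ≤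
      2 * s * Real.exp (-(t * x) + (2 * s * (2 * m - 2).choose (k - 2) : ℕ) * p * Real.exp t) := by
    rw [Ex_sum]
    refine (Finset.sum_le_sum fun i _ => hx2 i).trans ?_
    rw [Finset.sum_const, nsmul_eq_mul]
    refine mul_le_mul_of_nonneg_right ?_ (Real.exp_pos _).le
    exact_mod_cast hScard
  have hpt : ∀ E : KSet (2 * m) k → Bool,
      1 - (if est E ≠ σ ∧ est E ≠ negB σ then (1:ℝ) else 0) ≤
      ((∏ i ∈ ST, (1 - (if cnt (Dset (2 * m) k i RT) E = a then (1:ℝ) else 0)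
        * (if cnt (Dset (2 * m) k i RF) E = b then (1:ℝ) else 0)))
      + ∏ i ∈ SF, (1 - (if cnt (Dset (2 * m) k i RF) E = a then (1:ℝ) else 0)
        * (if cnt (Dset (2 * m) k i RT) E = b then (1:ℝ) else 0)))
      + ∑ i ∈ S, if x ≤ (cnt (Wset (2 * m) k i S) E : ℝ) then 1 else 0 := by
    intro E
    have g0 : ∀ (P Q : Prop) [Decidable P] [Decidable Q],
        (0:ℝ) ≤ 1 - (if P then (1:ℝ) else 0) * (if Q then (1:ℝ) else 0) := by
      intro P Q _ _; split_ifs <;> norm_num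
    have p1 : (0:ℝ) ≤ ∏ i ∈ ST, (1 - (if cnt (Dset (2 * m) k i RT) E = a then (1:ℝ) else 0)
        * (if cnt (Dset (2 * m) k i RF) E = b then (1:ℝ) else 0)) :=
      Finset.prod_nonneg fun i _ => g0 _ _
    have p2 : (0:ℝ) ≤ ∏ i ∈ SF, (1 - (if cnt (Dset (2 * m) k i RF) E = a then (1:ℝ) else 0)
        * (if cnt (Dset (2 * m) k i RT) E = b then (1:ℝ) else 0)) :=
      Finset.prod_nonneg fun i _ => g0 _ _
    have p3 : (0:ℝ) ≤ ∑ i ∈ S, if x ≤ (cnt (Wset (2 * m) k i S) E : ℝ) then (1:ℝ) else 0 :=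
      Finset.sum_nonneg fun i _ => by split_ifs <;> norm_num
    by_cases hT : ∃ i ∈ ST, cnt (Dset (2 * m) k i RT) E = a ∧ cnt (Dset (2 * m) k i RF) E = b
    swap
    · have : ∏ i ∈ ST, (1 - (if cnt (Dset (2 * m) k i RT) E = a then (1:ℝ) else 0)
        * (if cnt (Dset (2 * m) k i RF) E = b then (1:ℝ) else 0)) = 1 := by
        refine Finset.prod_eq_one fun i hi => ?_
        push Not at hT
        have := hT i hi
        split_ifs with h1 h2
        · exact absurd h2 (this h1)
        all_goals norm_num
      rw [this]
      split_ifs <;> linarith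
    by_cases hF : ∃ i ∈ SF, cnt (Dset (2 * m) k i RF) E = a ∧ cnt (Dset (2 * m) k i RT) E = b
    swap
    · have : ∏ i ∈ SF, (1 - (if cnt (Dset (2 * m) k i RF) E = a then (1:ℝ) else 0)
        * (if cnt (Dset (2 * m) k i RT) E = b then (1:ℝ) else 0)) = 1 := by
        refine Finset.prod_eq_one fun i hi => ?_
        push Not at hF
        have := hF i hi
        split_ifs with h1 h2
        · exact absurd h2 (this h1)
        all_goals norm_num
      rw [this]
      split_ifs <;> linarith
    by_cases hW : ∃ i ∈ S, x ≤ (cnt (Wset (2 * m) k i S) E : ℝ)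
    · obtain ⟨i, hi, hxi⟩ := hW
      have : (1:ℝ) ≤ ∑ i ∈ S, if x ≤ (cnt (Wset (2 * m) k i S) E : ℝ) then (1:ℝ) else 0 := by
        have h := Finset.single_le_sum (s := S)
          (f := fun i => if x ≤ (cnt (Wset (2 * m) k i S) E : ℝ) then (1:ℝ) else 0)
          (fun i _ => by split_ifs <;> norm_num) hi
        simp only [if_pos hxi] at h
        exact h
      split_ifs <;> linarith
    push Not at hW
    obtain ⟨i, hi, hia, hib⟩ := hT
    obtain ⟨j, hj, hja, hjb⟩ := hF
    have hiS : i ∈ S := Finset.mem_union_left _ hi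
    have hjS : j ∈ S := Finset.mem_union_right _ hj
    have hsw := swap_sum (k := k) hk σ S i j hiS hjS (hSTσ i hi) (hSFσ j hj) RT RF hRT hRF E
    rw [hia, hib, hja, hjb] at hsw
    have w1 := hW i hiS
    have w2 := hW j hjS
    have hlt := hypProb_lt hq hqp hp σ (Equiv.swap i j) E (by linarith)
    have hbal := balanced_perm σ (Equiv.swap i j) hσ
    have hmax := (hest E).2 _ hbal
    have hfail : est E ≠ σ ∧ est E ≠ negB σ := by
      constructor
      · intro h; rw [h] at hmax; linarith
      · intro h; rw [h, hypProb_neg] at hmax; linarith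
    rw [if_pos hfail]
    linarith
  have hfin := Ex_mono hw hpt
  rw [Ex_sub, Ex_one, Ex_add, Ex_add] at hfin
  rw [← Ex_hyp]
  linarith

lemma prEvent_bounds {m k : ℕ} {p q : ℝ} (hq : 0 < q) (hqp : q < p) (hp : p < 1)
    (Q : (Fin (2 * m) → Bool) → (KSet (2 * m) k → Bool) → Prop) (c : ℝ)
    (h : ∀ σ, balanced σ → c ≤ ∑ E : KSet (2 * m) k → Bool, hypProb p q σ E *
        (if Q σ E then 1 else 0)) :
    c ≤ prEvent (2 * m) k p q Q ∧ prEvent (2 * m) k p q Q ≤ 1 := by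
  set B := Finset.univ.filter (fun τ : Fin (2 * m) → Bool => balanced τ) with hB
  have hne : B.Nonempty := by
    obtain ⟨T, -, hT⟩ := Finset.exists_subset_card_eq (s := (Finset.univ : Finset (Fin (2 * m))))
      (n := m) (by simp; omega)
    refine ⟨fun i => decide (i ∈ T), ?_⟩
    simp [hB, balanced, hT]
  have hBpos : (0:ℝ) < B.card := by exact_mod_cast hne.card_pos
  have hpr : prEvent (2 * m) k p q Q = ∑ σ ∈ B, (1 / (B.card : ℝ)) *
      ∑ E : KSet (2 * m) k → Bool, hypProb p q σ E * (if Q σ E then 1 else 0) := by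
    unfold prEvent sigProb
    rw [hB, Finset.sum_filter]
    refine Finset.sum_congr rfl fun σ _ => ?_
    split_ifs with hb
    · rw [Finset.mul_sum]
      exact Finset.sum_congr rfl fun E _ => by ring
    · simp
  have hone : ∑ σ ∈ B, (1 / (B.card : ℝ)) = 1 := by
    rw [Finset.sum_const, nsmul_eq_mul]; field_simp
  rw [hpr]
  constructor
  · calc c = ∑ σ ∈ B, (1 / (B.card : ℝ)) * c := by rw [← Finset.sum_mul, hone, one_mul]
      _ ≤ _ := Finset.sum_le_sum fun σ hσ => by
          refine mul_le_mul_of_nonneg_left (h σ ?_) (by positivity)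
          simpa [hB] using hσ
  · calc _ ≤ ∑ σ ∈ B, (1 / (B.card : ℝ)) * 1 := Finset.sum_le_sum fun σ hσ => by
          refine mul_le_mul_of_nonneg_left ?_ (by positivity)
          have hw := edgeP_bounds (k := k) hq hqp hp σ
          have h1 := Ex_mono hw (f := fun E => if Q σ E then (1:ℝ) else 0) (g := fun _ => 1)
            (fun E => by split_ifs <;> norm_num)
          rw [Ex_one, Ex_hyp] at h1
          exact h1
      _ = 1 := by simp only [mul_one]; exact hone

end FailBound

/-! ### Asymptotics -/

section Asym
open Topology

lemma log_fact_le (n : ℕ) (hn : 1 ≤ n) :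
    Real.log (n.factorial) ≤ n * Real.log n - n + Real.log (2 * n) / 2 + 1 := by
  obtain ⟨j, rfl⟩ : ∃ j, n = j + 1 := ⟨n - 1, by omega⟩
  have h1 := Stirling.log_stirlingSeq_formula (j + 1)
  have h2 := Stirling.stirlingSeq'_antitone (Nat.zero_le j)
  have h3 : Real.log (Stirling.stirlingSeq (j + 1)) ≤ 1 := by
    have hpos : 0 < Stirling.stirlingSeq (j + 1) := Stirling.stirlingSeq'_pos j
    have h4 : Stirling.stirlingSeq (j + 1) ≤ Real.exp 1 := by
      refine h2.trans ?_
      simp only [Function.comp, Nat.succ_eq_add_one, zero_add, Stirling.stirlingSeq_one]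
      apply div_le_self (Real.exp_pos _).le
      rw [Real.one_le_sqrt]; norm_num
    calc _ ≤ Real.log (Real.exp 1) := Real.log_le_log hpos h4
      _ = 1 := Real.log_exp 1
  have hn0 : ((j + 1 : ℕ) : ℝ) ≠ 0 := by positivity
  rw [Real.log_div hn0 (Real.exp_pos 1).ne', Real.log_exp] at h1
  linarith

lemma binom_lower (N a : ℕ) (p : ℝ) (ha : 1 ≤ a) (hp0 : 0 < p) (hp : p ≤ 1 / 2)
    (haN : (a:ℝ) ^ 2 ≤ N / 2) (hNp : (N:ℝ) * p ^ 2 ≤ 1) :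
    Real.exp (- (N * p) + a * Real.log (N * p) - (a * Real.log a - a)
        - Real.log (2 * a) / 2 - 3 - Real.log 2)
      ≤ (N.choose a : ℝ) * p ^ a * (1 - p) ^ (N - a) := by
  have ha1 : (1:ℝ) ≤ a := by exact_mod_cast ha
  have hN2 : (2:ℝ) ≤ N := by nlinarith
  have hN0 : (0:ℝ) < N := by linarith
  have haN' : a ≤ N := by
    have : (a:ℝ) ≤ N := by nlinarith
    exact_mod_cast this
  have hf0 : (0:ℝ) < a.factorial := by exact_mod_cast a.factorial_pos
  have c1 : (N:ℝ) ^ a / 2 / a.factorial ≤ (N.choose a : ℝ) := by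
    have h1 := Nat.pow_le_choose (α := ℝ) a N
    rw [div_le_iff₀ hf0, mul_comm]
    have h1' : ((N + 1 - a : ℕ) : ℝ) ^ a ≤ a.factorial * (N.choose a : ℝ) := by
      rw [div_le_iff₀ hf0] at h1
      rw [mul_comm]; exact h1
    refine le_trans ?_ h1'
    have h2 : ((N:ℝ) - a) ≤ ((N + 1 - a : ℕ) : ℝ) := by
      rw [Nat.cast_sub (by omega)]; push_cast; linarith
    have h3 : (0:ℝ) ≤ (N:ℝ) - a := by
      have : (a:ℝ) ≤ N := by exact_mod_cast haN'
      linarith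
    refine le_trans ?_ (pow_le_pow_left₀ h3 h2 a)
    have h4 : (N:ℝ) - a = N * (1 + -(a / N)) := by field_simp; ring
    rw [h4, mul_pow]
    have h5 : (a:ℝ) / N ≤ 1 := by rw [div_le_one hN0]; linarith
    have h6 := one_add_mul_le_pow (a := -((a:ℝ) / N)) (by linarith) a
    have h7 : (1:ℝ) / 2 ≤ 1 + a * -((a:ℝ) / N) := by
      have : (a:ℝ) * ((a:ℝ) / N) ≤ 1 / 2 := by
        rw [← mul_div_assoc, div_le_iff₀ hN0]; nlinarith
      linarith
    have h8 : (0:ℝ) ≤ (N:ℝ) ^ a := by positivity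
    nlinarith
  have c2 : Real.exp (-(N * p) - 2) ≤ (1 - p) ^ (N - a) := by
    have h1 : Real.exp (-p - 2 * p ^ 2) ≤ 1 - p := by
      rw [← Real.le_log_iff_exp_le (by linarith)]
      refine le_trans ?_ (Real.one_sub_inv_le_log_of_pos (by linarith))
      have : (1 - p)⁻¹ ≤ 1 + p + 2 * p ^ 2 := by
        rw [inv_le_iff_one_le_mul₀ (by linarith)]
        nlinarith [mul_nonneg (sq_nonneg p) (by linarith : 0 ≤ 1 - 2 * p)]
      linarith
    calc Real.exp (-(N * p) - 2) ≤ Real.exp (N * (-p - 2 * p ^ 2)) := by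
          apply Real.exp_le_exp.mpr; nlinarith
      _ = (Real.exp (-p - 2 * p ^ 2)) ^ N := Real.exp_nat_mul _ _
      _ ≤ (1 - p) ^ N := pow_le_pow_left₀ (Real.exp_pos _).le h1 _
      _ ≤ (1 - p) ^ (N - a) := pow_le_pow_of_le_one (by linarith) (by linarith) (Nat.sub_le _ _)
  have c3 : Real.exp (a * Real.log (N * p) - (a * Real.log a - a)
        - Real.log (2 * a) / 2 - 1 - Real.log 2) ≤ (N.choose a : ℝ) * p ^ a := by
    have h1 : (N:ℝ) ^ a / 2 / a.factorial * p ^ a ≤ (N.choose a : ℝ) * p ^ a :=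
      mul_le_mul_of_nonneg_right c1 (by positivity)
    refine le_trans ?_ h1
    have hlf := log_fact_le a ha
    have h2 : (N:ℝ) ^ a / 2 / a.factorial * p ^ a =
        Real.exp (a * Real.log (N * p) - Real.log a.factorial - Real.log 2) := by
      rw [Real.exp_sub, Real.exp_sub, Real.exp_log hf0, Real.exp_log (by norm_num : (0:ℝ) < 2),
        Real.exp_nat_mul, Real.exp_log (by positivity), mul_pow]
      field_simp
    rw [h2]
    apply Real.exp_le_exp.mpr
    linarith
  calc _ = Real.exp (a * Real.log (N * p) - (a * Real.log a - a)
        - Real.log (2 * a) / 2 - 1 - Real.log 2) * Real.exp (-(N * p) - 2) := by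
        rw [← Real.exp_add]; congr 1; ring
    _ ≤ _ := mul_le_mul c3 c2 (Real.exp_pos _).le (by positivity)

lemma binom_asym (N a : ℕ → ℕ) (L : ℕ → ℝ) (θ x η : ℝ) (hθ : 0 < θ) (hx : 0 < x) (hη : 0 < η)
    (hL : Tendsto L atTop atTop) (hLN : Tendsto (fun m => L m ^ 2 / N m) atTop (𝓝 0))
    (hN : ∀ᶠ m in atTop, 0 < N m)
    (ha : Tendsto (fun m => (a m : ℝ) / L m) atTop (𝓝 x)) :
    ∀ᶠ m in atTop, Real.exp (-(θ - x + x * Real.log (x / θ) + η) * L m) ≤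
      ((N m).choose (a m) : ℝ) * (θ * L m / N m) ^ (a m) * (1 - θ * L m / N m) ^ (N m - a m) := by
  have hL0 : ∀ᶠ m in atTop, 1 ≤ L m := hL.eventually_ge_atTop 1
  have hlogL : Tendsto (fun m => Real.log (L m) / L m) atTop (𝓝 0) :=
    (Real.isLittleO_log_id_atTop.tendsto_div_nhds_zero).comp hL
  have hinv : Tendsto (fun m => (L m)⁻¹) atTop (𝓝 0) := tendsto_inv_atTop_zero.comp hL
  have hlog1 : Tendsto (fun m => Real.log ((a m : ℝ) / L m)) atTop (𝓝 (Real.log x)) :=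
    (Real.continuousAt_log hx.ne').tendsto.comp ha
  have hlim : Tendsto (fun m => -θ + ((a m : ℝ) / L m) * (Real.log θ - Real.log ((a m : ℝ) / L m))
      + (a m : ℝ) / L m - ((Real.log 2 + Real.log ((a m : ℝ) / L m)) * (L m)⁻¹
        + Real.log (L m) / L m) / 2 - (3 + Real.log 2) * (L m)⁻¹) atTop
      (𝓝 (-θ + x * (Real.log θ - Real.log x) + x - ((Real.log 2 + Real.log x) * 0 + 0) / 2
        - (3 + Real.log 2) * 0)) := by
    refine Tendsto.sub (Tendsto.sub (Tendsto.add (Tendsto.add tendsto_const_nhds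
      (ha.mul (tendsto_const_nhds.sub hlog1))) ha) ?_) (tendsto_const_nhds.mul hinv)
    exact (((tendsto_const_nhds.add hlog1).mul hinv).add hlogL).div_const 2
  have hgt := hlim.eventually (lt_mem_nhds (b := _)
    (a := -(θ - x + x * Real.log (x / θ) + η)) (by
      rw [Real.log_div hx.ne' hθ.ne']; ring_nf; linarith))
  have ha2 : ∀ᶠ m in atTop, (a m : ℝ) / L m < x + 1 := ha.eventually (gt_mem_nhds (by linarith))
  have ha1 : ∀ᶠ m in atTop, x / 2 < (a m : ℝ) / L m := ha.eventually (lt_mem_nhds (by linarith))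
  have hs1 : ∀ᶠ m in atTop, L m ^ 2 / N m < 1 / (2 * (x + 1) ^ 2) :=
    hLN.eventually (gt_mem_nhds (by positivity))
  have hs2 : ∀ᶠ m in atTop, L m ^ 2 / N m < 1 / (θ ^ 2) :=
    hLN.eventually (gt_mem_nhds (by positivity))
  have hs3 : ∀ᶠ m in atTop, L m ^ 2 / N m < 1 / (2 * θ) :=
    hLN.eventually (gt_mem_nhds (by positivity))
  filter_upwards [hL0, hgt, ha2, ha1, hs1, hs2, hs3, hN] with m k1 k2 k3 k4 k5 k6 k7 k8
  have hLp : 0 < L m := by linarith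
  have hNp : (0:ℝ) < N m := by exact_mod_cast k8
  rw [div_lt_iff₀ hLp] at k3
  rw [lt_div_iff₀ hLp] at k4
  have hapos : (0:ℝ) < a m := lt_trans (by positivity) k4
  have ha1 : 1 ≤ a m := by
    have : 0 < a m := by exact_mod_cast hapos
    omega
  have e1 : (N m : ℝ) * (θ * L m / N m) = θ * L m := by field_simp
  have hb := binom_lower (N m) (a m) (θ * L m / N m) ha1 (by positivity) ?_ ?_ ?_
  · refine le_trans (Real.exp_le_exp.mpr ?_) hb
    rw [e1, Real.log_mul hθ.ne' hLp.ne', Real.log_mul (by norm_num) hapos.ne']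
    rw [Real.log_div hapos.ne' hLp.ne'] at k2
    have k9 := mul_lt_mul_of_pos_right k2 hLp
    refine k9.le.trans (le_of_eq ?_)
    field_simp
    ring
  · rw [div_lt_div_iff₀ hNp (by positivity)] at k7
    rw [div_le_div_iff₀ hNp (by norm_num)]
    nlinarith
  · rw [div_lt_div_iff₀ hNp (by positivity)] at k5
    have : (a m : ℝ) ^ 2 ≤ ((x + 1) * L m) ^ 2 := pow_le_pow_left₀ hapos.le k3.le 2
    nlinarith
  · rw [div_lt_div_iff₀ hNp (by positivity)] at k6
    have : (N m : ℝ) * (θ * L m / N m) ^ 2 = θ ^ 2 * L m ^ 2 / N m := by field_simp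
    rw [this, div_le_one hNp]
    linarith

lemma descF_le (A B r : ℕ) (h : 2 * A ≤ B) :
    2 ^ r * A.descFactorial r ≤ B.descFactorial r := by
  induction r with
  | zero => simp
  | succ r ih =>
    rw [Nat.descFactorial_succ, Nat.descFactorial_succ, pow_succ]
    calc 2 ^ r * 2 * ((A - r) * A.descFactorial r)
        = (2 * (A - r)) * (2 ^ r * A.descFactorial r) := by ring
      _ ≤ (B - r) * B.descFactorial r := Nat.mul_le_mul (by omega) ih

lemma descF_ge (A B r : ℕ) (h : B + 7 * r ≤ 8 * A) :
    B.descFactorial r ≤ 8 ^ r * A.descFactorial r := by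
  induction r with
  | zero => simp
  | succ r ih =>
    rw [Nat.descFactorial_succ, Nat.descFactorial_succ, pow_succ]
    calc (B - r) * B.descFactorial r ≤ (8 * (A - r)) * (8 ^ r * A.descFactorial r) :=
          Nat.mul_le_mul (by omega) (ih (by omega))
      _ = _ := by ring

lemma choose_le' (A B r : ℕ) (h : 2 * A ≤ B) : 2 ^ r * A.choose r ≤ B.choose r := by
  have := descF_le A B r h
  rw [Nat.descFactorial_eq_factorial_mul_choose, Nat.descFactorial_eq_factorial_mul_choose] at this
  refine Nat.le_of_mul_le_mul_left ?_ r.factorial_pos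
  linarith

lemma choose_ge' (A B r : ℕ) (h : B + 7 * r ≤ 8 * A) : B.choose r ≤ 8 ^ r * A.choose r := by
  have := descF_ge A B r h
  rw [Nat.descFactorial_eq_factorial_mul_choose, Nat.descFactorial_eq_factorial_mul_choose] at this
  refine Nat.le_of_mul_le_mul_left ?_ r.factorial_pos
  linarith

end Asym

section Final
open Topology

lemma rate_exists (α β c : ℝ) (hα : 0 < α) (hβ : 0 < β) (hc : (Real.sqrt α - Real.sqrt β) ^ 2 < c) :
    ∃ δ > 0, (α - Real.sqrt α * Real.sqrt β + (Real.sqrt α * Real.sqrt β) *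
        Real.log ((Real.sqrt α * Real.sqrt β) / α))
      + (β - (Real.sqrt α * Real.sqrt β + δ) + (Real.sqrt α * Real.sqrt β + δ) *
        Real.log ((Real.sqrt α * Real.sqrt β + δ) / β)) < c := by
  have hu : 0 < Real.sqrt α := Real.sqrt_pos.mpr hα
  have hv : 0 < Real.sqrt β := Real.sqrt_pos.mpr hβ
  have hu2 : Real.sqrt α ^ 2 = α := Real.sq_sqrt hα.le
  have hv2 : Real.sqrt β ^ 2 = β := Real.sq_sqrt hβ.le
  set u := Real.sqrt α
  set v := Real.sqrt β
  let F : ℝ → ℝ := fun δ => (α - u * v + (u * v) * Real.log ((u * v) / α))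
      + (β - (u * v + δ) + (u * v + δ) * Real.log ((u * v + δ) / β))
  have hF0 : F 0 = (u - v) ^ 2 := by
    simp only [F, add_zero]
    rw [← hu2, ← hv2, Real.log_div (by positivity) (by positivity),
      Real.log_div (by positivity) (by positivity), Real.log_mul hu.ne' hv.ne', Real.log_pow,
      Real.log_pow]
    push_cast
    ring
  have hcont : ContinuousAt F 0 := by
    have h1 : ContinuousAt (fun δ : ℝ => u * v + δ) 0 := by fun_prop
    have h2 : ContinuousAt (fun δ : ℝ => Real.log ((u * v + δ) / β)) 0 := by
      refine ContinuousAt.log (h1.div_const β) ?_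
      simp only [add_zero]; positivity
    exact (continuousAt_const).add ((continuousAt_const.sub h1).add (h1.mul h2))
  have hev : ∀ᶠ δ in 𝓝[>] (0:ℝ), F δ < c := by
    apply nhdsWithin_le_nhds
    exact hcont.eventually (gt_mem_nhds (by rw [hF0]; exact hc))
  obtain ⟨δ, h1, h2⟩ := (hev.and self_mem_nhdsWithin).exists
  exact ⟨δ, h2, h1⟩

lemma seq_facts (k : ℕ) (hk : 2 ≤ k) (ρ : ℝ) (hρ0 : 0 < ρ) (hρ : ρ ≤ 1 / 2) :
    ∀ᶠ m : ℕ in atTop, 1 ≤ ⌊ρ * m⌋₊ ∧ (⌊ρ * m⌋₊ : ℝ) ≤ ρ * m ∧ ρ * m / 2 ≤ (⌊ρ * m⌋₊ : ℝ) ∧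
      ⌊ρ * m⌋₊ ≤ m ∧ 0 < (m - ⌊ρ * m⌋₊).choose (k - 1) ∧
      2 ^ (k - 1) * (m - ⌊ρ * m⌋₊).choose (k - 1) ≤ (2 * m - 1).choose (k - 1) ∧
      (2 * m - 1).choose (k - 1) ≤ 8 ^ (k - 1) * (m - ⌊ρ * m⌋₊).choose (k - 1) ∧
      (2 * m - 1) * (2 * m - 2).choose (k - 2) = (2 * m - 1).choose (k - 1) * (k - 1) ∧
      m ≤ (2 * m - 1).choose (k - 1) * (k - 1) ∧ 1 ≤ m := by
  have hlarge : ∀ᶠ m : ℕ in atTop, 2 / ρ ≤ (m:ℝ) :=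
    tendsto_natCast_atTop_atTop.eventually_ge_atTop _
  filter_upwards [hlarge, eventually_ge_atTop (4 * k)] with m h1 h2
  have hm0 : (0:ℝ) ≤ m := by positivity
  rw [div_le_iff₀ hρ0] at h1
  have f1 : (⌊ρ * m⌋₊ : ℝ) ≤ ρ * m := Nat.floor_le (by positivity)
  have f2 : ρ * m < ⌊ρ * m⌋₊ + 1 := Nat.lt_floor_add_one _
  have f3 : 1 ≤ ⌊ρ * m⌋₊ := Nat.le_floor (by push_cast; linarith)
  have f4 : 2 * ⌊ρ * m⌋₊ ≤ m := by
    have : (2:ℝ) * ⌊ρ * m⌋₊ ≤ m := by nlinarith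
    exact_mod_cast this
  have f5 : (2 * m - 1) * (2 * m - 2).choose (k - 2) = (2 * m - 1).choose (k - 1) * (k - 1) := by
    have := Nat.add_one_mul_choose_eq (2 * m - 2) (k - 2)
    rwa [show 2 * m - 2 + 1 = 2 * m - 1 by omega, show k - 2 + 1 = k - 1 by omega] at this
  have f6 : 0 < (2 * m - 2).choose (k - 2) := Nat.choose_pos (by omega)
  refine ⟨f3, f1, by linarith, by omega, Nat.choose_pos (by omega), choose_le' _ _ _ (by omega),
    choose_ge' _ _ _ (by omega), f5, ?_, by omega⟩
  rw [← f5]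
  calc m ≤ 2 * m - 1 := by omega
    _ = (2 * m - 1) * 1 := by ring
    _ ≤ _ := Nat.mul_le_mul_left _ f6

end Final

set_option maxHeartbeats 4000000 in
/-- If `α > β > 0` and `I(α,β) < 1` then the ML estimator fails with
probability `1 - o(1)`. -/
theorem mle_fails_below_threshold (k : ℕ) (hk : 2 ≤ k) (α β : ℝ) (hβ : 0 < β) (hαβ : β < α)
    (hI : (Real.sqrt α - Real.sqrt β) ^ 2 / 2 ^ (k - 1) < 1) :
    ∀ est : (m : ℕ) → (KSet (2 * m) k → Bool) → (Fin (2 * m) → Bool),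
      (∀ m : ℕ, isMLE (pParam k α (2 * m)) (pParam k β (2 * m)) (est m)) →
      Tendsto (fun m : ℕ =>
          prEvent (2 * m) k (pParam k α (2 * m)) (pParam k β (2 * m))
            (fun σ E => est m E ≠ σ ∧ est m E ≠ negB σ))
        atTop (nhds 1) := by
  intro est hest
  have hα : 0 < α := hβ.trans hαβ
  set J : ℝ := (Real.sqrt α - Real.sqrt β) ^ 2 with hJ
  have hJ0 : 0 ≤ J := sq_nonneg _
  set R : ℝ := 2 ^ (k - 1) with hR
  have hRpos : 0 < R := by positivity
  have hJR : J < R := by rwa [div_lt_one hRpos] at hI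
  obtain ⟨δ, hδ, hF⟩ := rate_exists α β ((J + R) / 2) hα hβ (by rw [← hJ]; linarith)
  set γ : ℝ := Real.sqrt α * Real.sqrt β with hγ
  have hγ0 : 0 < γ := mul_pos (Real.sqrt_pos.mpr hα) (Real.sqrt_pos.mpr hβ)
  set η : ℝ := (R - J) / 8 with hη
  have hη0 : 0 < η := by rw [hη]; linarith
  set ε : ℝ := (R - J) / (4 * R) with hε
  have hε0 : 0 < ε := by rw [hε]; apply div_pos <;> linarith
  have hε1 : ε ≤ 1 / 4 := by
    rw [hε, div_le_div_iff₀ (by linarith) (by norm_num)]; linarith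
  have hRε : R * (1 - ε) = R - (R - J) / 4 := by rw [hε]; field_simp
  set G : ℝ := 8 ^ (k - 1) with hG
  have hG0 : 0 < G := by positivity
  set t : ℝ := 3 * G / δ with ht
  have ht0 : 0 ≤ t := by positivity
  have hk1 : (1:ℝ) ≤ ((k - 1 : ℕ) : ℝ) := by
    have : 1 ≤ k - 1 := by omega
    exact_mod_cast this
  set K : ℝ := ((k - 1 : ℕ) : ℝ) with hK
  set ρ : ℝ := min (1 / 2) (Real.exp (-t) / (2 * K * α)) with hρ
  have hρ0 : 0 < ρ := by rw [hρ]; apply lt_min (by norm_num); positivity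
  have hρ1 : ρ ≤ 1 / 2 := min_le_left _ _
  have hρ2 : 2 * ρ * K * α * Real.exp t ≤ 1 := by
    have h1 : ρ ≤ Real.exp (-t) / (2 * K * α) := min_le_right _ _
    rw [le_div_iff₀ (by positivity)] at h1
    have h2 : Real.exp (-t) * Real.exp t = 1 := by rw [← Real.exp_add]; simp
    have h3 := mul_le_mul_of_nonneg_right h1 (Real.exp_pos t).le
    linarith
  have hfacts := seq_facts k hk ρ hρ0 hρ1
  set s : ℕ → ℕ := fun m => ⌊ρ * m⌋₊ with hs
  set N : ℕ → ℕ := fun m => (m - s m).choose (k - 1) with hN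
  set C : ℕ → ℕ := fun m => (2 * m - 1).choose (k - 1) with hC
  set lam : ℕ → ℝ := fun m => Real.log ((2 * m : ℕ) : ℝ) with hlam
  set L : ℕ → ℝ := fun m => lam m * N m / C m with hL
  have hcast : Tendsto (fun m : ℕ => ((2 * m : ℕ) : ℝ)) atTop atTop :=
    tendsto_natCast_atTop_atTop.comp (tendsto_id.const_mul_atTop' (by norm_num : 0 < 2))
  have hlamT : Tendsto lam atTop atTop := Real.tendsto_log_atTop.comp hcast
  have hlam1 : ∀ᶠ m in atTop, 1 ≤ lam m := hlamT.eventually_ge_atTop 1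
  have hLlow : ∀ᶠ m in atTop, lam m / G ≤ L m := by
    filter_upwards [hfacts, hlam1] with m hm h1
    obtain ⟨-, -, -, -, g5, g6, g7, -, -, -⟩ := hm
    have hNp : (0:ℝ) < N m := by exact_mod_cast g5
    have hCp : (0:ℝ) < C m := by
      have : 0 < C m := lt_of_lt_of_le (by positivity) g6
      exact_mod_cast this
    have g7' : (C m : ℝ) ≤ G * N m := by rw [hG]; exact_mod_cast g7
    rw [hL]
    simp only
    rw [div_le_div_iff₀ hG0 hCp]
    nlinarith
  have hLhigh : ∀ᶠ m in atTop, L m * R ≤ lam m := by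
    filter_upwards [hfacts, hlam1] with m hm h1
    obtain ⟨-, -, -, -, g5, g6, g7, -, -, -⟩ := hm
    have hCp : (0:ℝ) < C m := by
      have : 0 < C m := lt_of_lt_of_le (by positivity) g6
      exact_mod_cast this
    have g6' : R * N m ≤ C m := by rw [hR]; exact_mod_cast g6
    rw [hL]
    simp only
    rw [div_mul_eq_mul_div, div_le_iff₀ hCp]
    nlinarith
  have hLT : Tendsto L atTop atTop :=
    tendsto_atTop_mono' _ hLlow (hlamT.atTop_div_const hG0)
  -- `lam^2 / C → 0`
  have hlamC : Tendsto (fun m => lam m ^ 2 / (C m : ℝ)) atTop (nhds 0) := by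
    have h1 : Tendsto (fun m : ℕ => (2 * K) * (lam m ^ 2 / ((2 * m : ℕ) : ℝ))) atTop (nhds 0) := by
      have := ((Real.isLittleO_pow_log_id_atTop (n := 2)).tendsto_div_nhds_zero).comp hcast
      have h2 := this.const_mul (2 * K)
      rw [mul_zero] at h2
      exact h2
    refine squeeze_zero' (Eventually.of_forall fun m => by positivity) ?_ h1
    filter_upwards [hfacts] with m hm
    obtain ⟨-, -, -, -, g5, g6, g7, -, g9, g10⟩ := hm
    have hCp : (0:ℝ) < C m := by
      have : 0 < C m := lt_of_lt_of_le (by positivity) g6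
      exact_mod_cast this
    have g9' : (m : ℝ) ≤ C m * K := by rw [hK]; exact_mod_cast g9
    have hmp : (0:ℝ) < m := by exact_mod_cast g10
    push_cast
    rw [← mul_div_assoc, div_le_div_iff₀ hCp (by positivity)]
    nlinarith [sq_nonneg (lam m)]
  have hLN : Tendsto (fun m => L m ^ 2 / N m) atTop (nhds 0) := by
    refine squeeze_zero' (Eventually.of_forall fun m => by positivity) ?_ hlamC
    filter_upwards [hfacts] with m hm
    obtain ⟨-, -, -, -, g5, g6, g7, -, g9, g10⟩ := hm
    have hCp : (0:ℝ) < C m := by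
      have : 0 < C m := lt_of_lt_of_le (by positivity) g6
      exact_mod_cast this
    have hNp : (0:ℝ) < N m := by exact_mod_cast g5
    have hNC : (N m : ℝ) ≤ C m := by
      have : N m ≤ C m := le_trans (Nat.le_mul_of_pos_left _ (by positivity)) g6
      exact_mod_cast this
    have : L m ^ 2 / N m = lam m ^ 2 / C m * (N m / C m) := by
      simp only [hL]; field_simp
    rw [this]
    refine mul_le_of_le_one_right (by positivity) ?_
    rw [div_le_one hCp]; exact hNC
  have hNpos : ∀ᶠ m in atTop, 0 < N m := by
    filter_upwards [hfacts] with m hm using hm.2.2.2.2.1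
  set a : ℕ → ℕ := fun m => ⌊γ * L m⌋₊ with ha
  set b : ℕ → ℕ := fun m => ⌈(γ + δ) * L m⌉₊ with hb
  have haT : Tendsto (fun m => (a m : ℝ) / L m) atTop (nhds γ) :=
    (tendsto_nat_floor_mul_div_atTop hγ0.le).comp hLT
  have hbT : Tendsto (fun m => (b m : ℝ) / L m) atTop (nhds (γ + δ)) :=
    (tendsto_nat_ceil_mul_div_atTop (by linarith)).comp hLT
  have hPa := binom_asym N a L α γ η hα hγ0 hη0 hLT hLN hNpos haT
  have hPb := binom_asym N b L β (γ + δ) η hβ (by linarith) hη0 hLT hLN hNpos hbT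
  -- `p < 1`
  have hpsmall : ∀ᶠ m in atTop, lam m ^ 2 / (C m : ℝ) < 1 / α :=
    hlamC.eventually (gt_mem_nhds (by positivity))
  set err : ℕ → ℝ := fun m => 2 * Real.exp (-(ρ / 4 * Real.exp (ε * lam m))) + Real.exp (-lam m)
    with herr
  have herrT : Tendsto err atTop (nhds 0) := by
    have h1 : Tendsto (fun m => Real.exp (ε * lam m)) atTop atTop :=
      Real.tendsto_exp_atTop.comp (hlamT.const_mul_atTop hε0)
    have h2 : Tendsto (fun m => Real.exp (-(ρ / 4 * Real.exp (ε * lam m)))) atTop (nhds 0) :=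
      Real.tendsto_exp_neg_atTop_nhds_zero.comp (h1.const_mul_atTop (by positivity))
    have h3 : Tendsto (fun m => Real.exp (-lam m)) atTop (nhds 0) :=
      Real.tendsto_exp_neg_atTop_nhds_zero.comp hlamT
    have h4 := (h2.const_mul 2).add h3
    simp only [mul_zero, add_zero] at h4
    exact h4
  have hmain : ∀ᶠ m in atTop,
      1 - err m ≤ prEvent (2 * m) k (pParam k α (2 * m)) (pParam k β (2 * m))
            (fun σ E => est m E ≠ σ ∧ est m E ≠ negB σ) ∧
      prEvent (2 * m) k (pParam k α (2 * m)) (pParam k β (2 * m))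
            (fun σ E => est m E ≠ σ ∧ est m E ≠ negB σ) ≤ 1 := by
    filter_upwards [hfacts, hlam1, hLlow, hLhigh, hPa, hPb, hpsmall]
      with m hm q1 q2 q3 q4 q5 q6
    obtain ⟨g1, g2, g3, g4, g5, g6, g7, g8, g9, g10⟩ := hm
    have hCp : (0:ℝ) < C m := by
      have : 0 < C m := lt_of_lt_of_le (by positivity) g6
      exact_mod_cast this
    have hNp : (0:ℝ) < N m := by exact_mod_cast g5
    have hmp : (1:ℝ) ≤ m := by exact_mod_cast g10
    have hexplam : Real.exp (lam m) = 2 * m := by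
      simp only [hlam]
      rw [Real.exp_log (by push_cast; linarith)]
      push_cast; ring
    have hpe : pParam k α (2 * m) = α * lam m / C m := rfl
    have hqe : pParam k β (2 * m) = β * lam m / C m := rfl
    have hpe' : pParam k α (2 * m) = α * L m / N m := by
      rw [hpe]; simp only [hL]; field_simp
    have hqe' : pParam k β (2 * m) = β * L m / N m := by
      rw [hqe]; simp only [hL]; field_simp
    have hq0 : 0 < pParam k β (2 * m) := by rw [hqe]; positivity
    have hqp : pParam k β (2 * m) < pParam k α (2 * m) := by
      rw [hqe, hpe]
      apply div_lt_div_of_pos_right _ hCp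
      apply mul_lt_mul_of_pos_right hαβ; linarith
    have hp1 : pParam k α (2 * m) < 1 := by
      rw [hpe, div_lt_one hCp]
      rw [div_lt_div_iff₀ hCp hα] at q6
      nlinarith
    have hLpos : 0 < L m := lt_of_lt_of_le (by positivity) q2
    refine prEvent_bounds hq0 hqp hp1 _ _ fun σ hσ => ?_
    have hab : (a m : ℝ) + δ * L m ≤ b m := by
      have h1 : (a m : ℝ) ≤ γ * L m := Nat.floor_le (by positivity)
      have h2 : (γ + δ) * L m ≤ b m := Nat.le_ceil _
      linarith
    obtain ⟨P, hPdef⟩ : ∃ P : ℝ, P = (((N m).choose (a m) : ℝ) * pParam k α (2 * m) ^ a m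
        * (1 - pParam k α (2 * m)) ^ (N m - a m))
        * (((N m).choose (b m) : ℝ) * pParam k β (2 * m) ^ b m
        * (1 - pParam k β (2 * m)) ^ (N m - b m)) := ⟨_, rfl⟩
    have hNm : N m = (m - s m).choose (k - 1) := rfl
    have hfb := fail_bound (s := s m) (a := a m) (b := b m) hk hq0 hqp hp1 σ hσ g4 t (δ * L m) ht0
      hab (N m) hNm P hPdef (est m) (hest m)
    refine le_trans ?_ (hfb.trans (le_of_eq (Finset.sum_congr rfl fun E _ => by congr)))
    have hPlow : Real.exp (ε * lam m) / (2 * m) ≤ P := by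
      have h1 := mul_le_mul q4 q5 (Real.exp_pos _).le (le_trans (Real.exp_pos _).le q4)
      rw [← hpe', ← hqe', ← hPdef, ← Real.exp_add] at h1
      refine le_trans ?_ h1
      rw [← hexplam, ← Real.exp_sub]
      apply Real.exp_le_exp.mpr
      have h2 : (R * (1 - ε)) * L m ≤ (1 - ε) * lam m := by nlinarith
      have h3 : ((α - γ + γ * Real.log (γ / α))
        + (β - (γ + δ) + (γ + δ) * Real.log ((γ + δ) / β))) + 2 * η ≤ R * (1 - ε) := by
        rw [hRε, hη]; linarith
      have h4 := mul_le_mul_of_nonneg_right h3 hLpos.le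
      linarith
    have hsP : ρ / 4 * Real.exp (ε * lam m) ≤ s m * P := by
      have h1 : ρ * m / 2 * (Real.exp (ε * lam m) / (2 * m)) ≤ s m * P :=
        mul_le_mul g3 hPlow (by positivity) (by positivity)
      refine le_trans (le_of_eq ?_) h1
      field_simp; ring
    have hWt : (2 * s m : ℝ) * Real.exp (-(t * (δ * L m)) +
        (2 * s m * (2 * m - 2).choose (k - 2) : ℕ) * pParam k α (2 * m) * Real.exp t)
        ≤ Real.exp (-lam m) := by
      have h1 : (2 * s m : ℝ) ≤ Real.exp (lam m) := by
        rw [hexplam]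
        have : (s m : ℝ) ≤ m := by exact_mod_cast g4
        linarith
      have h2 : 3 * lam m ≤ t * (δ * L m) := by
        have : t * (δ * L m) = 3 * (G * L m) := by rw [ht]; field_simp
        rw [this]
        rw [div_le_iff₀ hG0] at q2
        linarith
      have h3 : ((2 * s m * (2 * m - 2).choose (k - 2) : ℕ) : ℝ) * pParam k α (2 * m) * Real.exp t
          ≤ lam m := by
        have g8' : (2 * (m:ℝ) - 1) * ((2 * m - 2).choose (k - 2) : ℝ) = C m * K := by
          have : ((2 * m - 1 : ℕ) : ℝ) = 2 * (m:ℝ) - 1 := by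
            rw [Nat.cast_sub (by omega)]; push_cast; ring
          rw [← this, hK]
          exact_mod_cast g8
        have h4 : (m:ℝ) * ((2 * m - 2).choose (k - 2) : ℝ) ≤ C m * K := by
          rw [← g8']
          apply mul_le_mul_of_nonneg_right _ (by positivity)
          linarith
        have h5 : (s m : ℝ) * ((2 * m - 2).choose (k - 2) : ℝ) ≤ ρ * (C m * K) := by
          calc (s m : ℝ) * ((2 * m - 2).choose (k - 2) : ℝ)
              ≤ (ρ * m) * ((2 * m - 2).choose (k - 2) : ℝ) :=
                mul_le_mul_of_nonneg_right g2 (by positivity)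
            _ = ρ * (m * ((2 * m - 2).choose (k - 2) : ℝ)) := by ring
            _ ≤ _ := mul_le_mul_of_nonneg_left h4 hρ0.le
        rw [hpe]
        push_cast
        have hl0 : 0 ≤ lam m := by linarith
        calc 2 * (s m : ℝ) * ((2 * m - 2).choose (k - 2) : ℝ) * (α * lam m / C m) * Real.exp t
            = ((s m : ℝ) * ((2 * m - 2).choose (k - 2) : ℝ)) *
                (2 * (α * lam m / C m) * Real.exp t) := by ring
          _ ≤ (ρ * (C m * K)) * (2 * (α * lam m / C m) * Real.exp t) :=
              mul_le_mul_of_nonneg_right h5 (by positivity)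
          _ = (2 * ρ * K * α * Real.exp t) * lam m := by field_simp
          _ ≤ 1 * lam m := mul_le_mul_of_nonneg_right hρ2 hl0
          _ = lam m := one_mul _
      calc _ ≤ Real.exp (lam m) * Real.exp (-3 * lam m + lam m) := by
            refine mul_le_mul h1 (Real.exp_le_exp.mpr ?_) (Real.exp_pos _).le (Real.exp_pos _).le
            linarith
        _ = _ := by rw [← Real.exp_add]; congr 1; ring
    have h6 : Real.exp (-(s m * P)) ≤ Real.exp (-(ρ / 4 * Real.exp (ε * lam m))) :=
      Real.exp_le_exp.mpr (by linarith)
    simp only [herr]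
    linarith
  refine tendsto_of_tendsto_of_tendsto_of_le_of_le' (g := fun m => 1 - err m) (h := fun _ => 1)
    ?_ tendsto_const_nhds (hmain.mono fun m h => h.1) (hmain.mono fun m h => h.2)
  simpa using herrT.const_sub 1
end

section
/- Suppose I(α,β) > 1. Then the failure probability of the maximum-likelihood estimator satisfies p_fail ≤ n^{−(I(α,β)−1)/2 + o(1)} as n → ∞; in particular p_fail = o(1). -/
open Finset Filter Matrix

open scoped Classical

namespace HSBMProof

/-- number of vertices labelled true by `σ` and false by `τ` -/
noncomputable def jd {n : ℕ} (σ τ : Fin n → Bool) : ℕ :=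
  (Finset.univ.filter (fun i => σ i = true ∧ τ i = false)).card

lemma card_tt {n m : ℕ} (σ τ : Fin n → Bool)
    (h : (Finset.univ.filter (fun i => σ i = true)).card = m) :
    (Finset.univ.filter (fun i => σ i = true ∧ τ i = true)).card + jd σ τ = m := by
  rw [← h, jd, ← Finset.card_filter_add_card_filter_not (s := Finset.univ.filter (fun i => σ i = true))
    (fun i => τ i = true), Finset.filter_filter, Finset.filter_filter]
  simp

lemma bal_true {m : ℕ} {σ : Fin (2 * m) → Bool} (h : balanced σ) :
    (Finset.univ.filter (fun i => σ i = true)).card = m := by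
  unfold balanced at h; omega

lemma bal_false {m : ℕ} {σ : Fin (2 * m) → Bool} (h : balanced σ) :
    (Finset.univ.filter (fun i => σ i = false)).card = m := by
  have h1 := bal_true h
  have h2 := Finset.card_filter_add_card_filter_not (s := (Finset.univ : Finset (Fin (2*m))))
    (fun i => σ i = true)
  simp at h2
  omega

lemma jd_comm {m : ℕ} {σ τ : Fin (2 * m) → Bool} (hσ : balanced σ) (hτ : balanced τ) :
    jd σ τ = jd τ σ := by
  have h1 := card_tt σ τ (bal_true hσ)
  have h2 := card_tt τ σ (bal_true hτ)
  have : (Finset.univ.filter (fun i => σ i = true ∧ τ i = true)) =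
      (Finset.univ.filter (fun i => τ i = true ∧ σ i = true)) := by
    ext i; simp [and_comm]
  rw [this] at h1
  omega

lemma bal_neg {m : ℕ} {σ : Fin (2 * m) → Bool} (h : balanced σ) : balanced (negB σ) := by
  have := bal_false h
  unfold balanced negB
  simp [this]

lemma jd_neg {m : ℕ} {σ τ : Fin (2 * m) → Bool} (hσ : balanced σ) :
    jd σ τ + jd σ (negB τ) = m := by
  have h1 := card_tt σ τ (bal_true hσ)
  have : jd σ (negB τ) = (Finset.univ.filter (fun i => σ i = true ∧ τ i = true)).card := by
    unfold jd negB; simp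
  omega

lemma jd_pos {m : ℕ} {σ τ : Fin (2 * m) → Bool} (hσ : balanced σ) (hτ : balanced τ)
    (h : τ ≠ σ) : 1 ≤ jd σ τ := by
  by_contra hc
  have h0 : jd σ τ = 0 := by omega
  have h1 : jd τ σ = 0 := by rw [← jd_comm hσ hτ]; exact h0
  apply h
  unfold jd at h0 h1
  rw [Finset.card_eq_zero, Finset.filter_eq_empty_iff] at h0 h1
  funext i
  have a := h0 (Finset.mem_univ i)
  have b := h1 (Finset.mem_univ i)
  cases hs : σ i <;> cases ht : τ i <;> simp_all

lemma inCluster_neg {n : ℕ} (σ : Fin n → Bool) (e : Finset (Fin n)) :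
    inCluster (negB σ) e ↔ inCluster σ e := by
  unfold inCluster negB; simp

lemma hypProb_neg {n k : ℕ} (p q : ℝ) (σ : Fin n → Bool) (E : KSet n k → Bool) :
    hypProb p q (negB σ) E = hypProb p q σ E := by
  unfold hypProb edgeP
  simp only [inCluster_neg]

/-- count of balanced vectors at given distance -/
lemma count_le {m : ℕ} {σ : Fin (2 * m) → Bool} (hσ : balanced σ) (j : ℕ) :
    (Finset.univ.filter (fun τ : Fin (2 * m) → Bool => balanced τ ∧ jd σ τ = j)).card
      ≤ m.choose j * m.choose j := by
  have hc : ((Finset.powersetCard j (Finset.univ.filter (fun i => σ i = true))) ×ˢ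
      (Finset.powersetCard j (Finset.univ.filter (fun i => σ i = false)))).card
      = m.choose j * m.choose j := by
    rw [Finset.card_product, Finset.card_powersetCard, Finset.card_powersetCard, bal_true hσ,
      bal_false hσ]
  rw [← hc]
  apply Finset.card_le_card_of_injOn (fun τ => (Finset.univ.filter (fun i => σ i = true ∧ τ i = false),
    Finset.univ.filter (fun i => τ i = true ∧ σ i = false)))
  · intro τ hτ
    simp only [Finset.coe_filter, Finset.mem_univ, true_and, Set.mem_ofPred_eq] at hτ
    obtain ⟨hb, hj⟩ := hτ
    have hj' : jd τ σ = j := by rw [← jd_comm hσ hb]; exact hj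
    simp only [Finset.coe_product, Set.mem_prod, Finset.mem_coe, Finset.mem_powersetCard]
    refine ⟨⟨?_, hj⟩, ⟨?_, hj'⟩⟩
    · intro i; simp; tauto
    · intro i; simp
  · intro τ hτ τ' hτ' h
    simp only [Prod.mk.injEq, Finset.ext_iff, Finset.mem_filter, Finset.mem_univ, true_and] at h
    funext i
    have a := h.1 i
    have b := h.2 i
    cases hs : σ i <;> cases ht : τ i <;> cases ht' : τ' i <;> simp_all

lemma card_mono_sub {n k : ℕ} (A C D : Finset (Fin n)) :
    (A.card.choose k : ℝ) - C.card.choose k - D.card.choose k ≤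
    ((Finset.powersetCard k A \ (Finset.powersetCard k C ∪ Finset.powersetCard k D)).card : ℝ) := by
  have h1 := Finset.le_card_sdiff (Finset.powersetCard k C ∪ Finset.powersetCard k D)
    (Finset.powersetCard k A)
  have h2 := Finset.card_union_le (Finset.powersetCard k C) (Finset.powersetCard k D)
  simp only [Finset.card_powersetCard] at h1 h2
  have h3 : A.card.choose k ≤ C.card.choose k + D.card.choose k +
    (Finset.powersetCard k A \ (Finset.powersetCard k C ∪ Finset.powersetCard k D)).card := by
    omega
  have h4 : (A.card.choose k : ℝ) ≤ C.card.choose k + D.card.choose k +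
    (Finset.powersetCard k A \ (Finset.powersetCard k C ∪ Finset.powersetCard k D)).card := by
    exact_mod_cast h3
  linarith

lemma mem_sub_iff {n k : ℕ} (hk : 1 ≤ k) (σ τ : Fin n → Bool) (b : Bool) (e : Finset (Fin n)) :
    e ∈ (Finset.powersetCard k (Finset.univ.filter (fun i => σ i = b)) \
      (Finset.powersetCard k (Finset.univ.filter (fun i => σ i = b ∧ τ i = true)) ∪
       Finset.powersetCard k (Finset.univ.filter (fun i => σ i = b ∧ τ i = false)))) →
    e.card = k ∧ (∀ i ∈ e, σ i = b) ∧ ¬ inCluster τ e := by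
  intro h
  simp only [Finset.mem_sdiff, Finset.mem_union, Finset.mem_powersetCard, not_or] at h
  obtain ⟨⟨h1, h2⟩, h3, h4⟩ := h
  have hs : ∀ i ∈ e, σ i = b := fun i hi => by simpa using h1 hi
  refine ⟨h2, hs, ?_⟩
  intro hc
  have hne : e.Nonempty := by rw [← Finset.card_pos]; omega
  obtain ⟨i0, hi0⟩ := hne
  cases ht : τ i0
  · apply h4
    refine ⟨fun i hi => ?_, h2⟩
    simp [hs i hi, hc i hi i0 hi0, ht]
  · apply h3
    refine ⟨fun i hi => ?_, h2⟩
    simp [hs i hi, hc i hi i0 hi0, ht]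

lemma half_count {m k : ℕ} (hk : 1 ≤ k) {σ τ : Fin (2 * m) → Bool} (hσ : balanced σ)
    (hτ : balanced τ) :
    2 * ((m.choose k : ℝ) - (m - jd σ τ).choose k - (jd σ τ).choose k) ≤
    ((Finset.univ.filter (fun e : KSet (2 * m) k => inCluster σ e.1 ∧ ¬ inCluster τ e.1)).card : ℝ) := by
  set F : Bool → Finset (Finset (Fin (2 * m))) := fun b =>
    (Finset.powersetCard k (Finset.univ.filter (fun i => σ i = b)) \
      (Finset.powersetCard k (Finset.univ.filter (fun i => σ i = b ∧ τ i = true)) ∪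
       Finset.powersetCard k (Finset.univ.filter (fun i => σ i = b ∧ τ i = false)))) with hF
  have hdisj : Disjoint (F true) (F false) := by
    rw [Finset.disjoint_left]
    intro e h1 h2
    obtain ⟨c1, a1, -⟩ := mem_sub_iff hk σ τ true e h1
    obtain ⟨-, a2, -⟩ := mem_sub_iff hk σ τ false e h2
    have hne : e.Nonempty := by rw [← Finset.card_pos]; omega
    obtain ⟨i, hi⟩ := hne
    have := a1 i hi
    rw [a2 i hi] at this
    exact absurd this (by simp)
  have hsub : F true ∪ F false ⊆ (Finset.univ.filter
      (fun e : KSet (2 * m) k => inCluster σ e.1 ∧ ¬ inCluster τ e.1)).image Subtype.val := by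
    intro e he
    have : ∃ b, e ∈ F b := by
      rcases Finset.mem_union.1 he with h | h
      · exact ⟨_, h⟩
      · exact ⟨_, h⟩
    obtain ⟨b, hb⟩ := this
    obtain ⟨c, a, d⟩ := mem_sub_iff hk σ τ b e hb
    rw [Finset.mem_image]
    refine ⟨⟨e, c⟩, ?_, rfl⟩
    simp only [Finset.mem_filter, Finset.mem_univ, true_and]
    exact ⟨fun i hi j hj => by rw [a i hi, a j hj], d⟩
  have hcard := (Finset.card_le_card hsub).trans Finset.card_image_le
  rw [Finset.card_union_of_disjoint hdisj] at hcard
  have hcard' : ((F true).card : ℝ) + (F false).card ≤ ((Finset.univ.filter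
      (fun e : KSet (2 * m) k => inCluster σ e.1 ∧ ¬ inCluster τ e.1)).card : ℝ) := by
    exact_mod_cast hcard
  have t1 := card_tt σ τ (bal_true hσ)
  have t2 := card_tt τ σ (bal_true hτ)
  have t3 := jd_comm hσ hτ
  have e1 : (Finset.univ.filter (fun i => σ i = true ∧ τ i = true)).card = m - jd σ τ := by omega
  have e2 : (Finset.univ.filter (fun i => σ i = true ∧ τ i = false)).card = jd σ τ := rfl
  have e3 : (Finset.univ.filter (fun i => σ i = false ∧ τ i = true)).card = jd σ τ := by
    rw [t3, jd]; congr 1; ext i; simp [and_comm]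
  have e4 : (Finset.univ.filter (fun i => σ i = false ∧ τ i = false)).card = m - jd σ τ := by
    have := Finset.card_filter_add_card_filter_not (s := Finset.univ.filter (fun i => σ i = false))
      (fun i => τ i = true)
    rw [Finset.filter_filter, Finset.filter_filter, bal_false hσ, e3] at this
    simp at this
    omega
  have f1 := card_mono_sub (k := k) (Finset.univ.filter (fun i => σ i = true))
    (Finset.univ.filter (fun i => σ i = true ∧ τ i = true))
    (Finset.univ.filter (fun i => σ i = true ∧ τ i = false))
  have f2 := card_mono_sub (k := k) (Finset.univ.filter (fun i => σ i = false))
    (Finset.univ.filter (fun i => σ i = false ∧ τ i = true))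
    (Finset.univ.filter (fun i => σ i = false ∧ τ i = false))
  rw [e1, e2, bal_true hσ] at f1
  rw [e3, e4, bal_false hσ] at f2
  have g1 : (m.choose k : ℝ) - (m - jd σ τ).choose k - (jd σ τ).choose k ≤ (F true).card := f1
  have g2 : (m.choose k : ℝ) - (jd σ τ).choose k - (m - jd σ τ).choose k ≤ (F false).card := f2
  linarith

lemma diff_count {m k : ℕ} (hk : 1 ≤ k) {σ τ : Fin (2 * m) → Bool} (hσ : balanced σ)
    (hτ : balanced τ) :
    4 * ((m.choose k : ℝ) - (m - jd σ τ).choose k - (jd σ τ).choose k) ≤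
    ((Finset.univ.filter (fun e : KSet (2 * m) k => ¬ (inCluster σ e.1 ↔ inCluster τ e.1))).card : ℝ) := by
  have h1 := half_count hk hσ hτ
  have h2 := half_count hk hτ hσ
  rw [← jd_comm hσ hτ] at h2
  have h3 : (Finset.univ.filter (fun e : KSet (2 * m) k => inCluster σ e.1 ∧ ¬ inCluster τ e.1)).card
    + (Finset.univ.filter (fun e : KSet (2 * m) k => inCluster τ e.1 ∧ ¬ inCluster σ e.1)).card
    ≤ (Finset.univ.filter (fun e : KSet (2 * m) k => ¬ (inCluster σ e.1 ↔ inCluster τ e.1))).card := by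
    rw [← Finset.card_union_of_disjoint]
    · apply Finset.card_le_card
      intro e
      simp only [Finset.mem_union, Finset.mem_filter, Finset.mem_univ, true_and]
      tauto
    · rw [Finset.disjoint_left]
      intro e
      simp only [Finset.mem_filter, Finset.mem_univ, true_and]
      tauto
  have h4 : ((Finset.univ.filter (fun e : KSet (2 * m) k => inCluster σ e.1 ∧ ¬ inCluster τ e.1)).card : ℝ)
    + (Finset.univ.filter (fun e : KSet (2 * m) k => inCluster τ e.1 ∧ ¬ inCluster σ e.1)).card
    ≤ (Finset.univ.filter (fun e : KSet (2 * m) k => ¬ (inCluster σ e.1 ↔ inCluster τ e.1))).card := by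
    exact_mod_cast h3
  linarith

lemma edgeP_mem {n : ℕ} {p q : ℝ} (hp : 0 ≤ p) (hp1 : p ≤ 1) (hq : 0 ≤ q) (hq1 : q ≤ 1)
    (σ : Fin n → Bool) (e : Finset (Fin n)) : 0 ≤ edgeP p q σ e ∧ edgeP p q σ e ≤ 1 := by
  unfold edgeP; split_ifs <;> exact ⟨by assumption, by assumption⟩

lemma hypProb_nonneg {n k : ℕ} {p q : ℝ} (hp : 0 ≤ p) (hp1 : p ≤ 1) (hq : 0 ≤ q) (hq1 : q ≤ 1)
    (σ : Fin n → Bool) (E : KSet n k → Bool) : 0 ≤ hypProb p q σ E := by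
  unfold hypProb
  apply Finset.prod_nonneg
  intro e _
  have := edgeP_mem hp hp1 hq hq1 σ e.1
  split_ifs <;> linarith [this.1, this.2]

lemma bc_one {p q : ℝ} (hp : 0 ≤ p) (hp1 : p ≤ 1) (hq : 0 ≤ q) (hq1 : q ≤ 1) :
    Real.sqrt p * Real.sqrt q + Real.sqrt (1 - p) * Real.sqrt (1 - q) ≤
      Real.exp (-((Real.sqrt p - Real.sqrt q) ^ 2 / 2)) := by
  have h1 := Real.add_one_le_exp (-((Real.sqrt p - Real.sqrt q) ^ 2 / 2))
  have a := Real.sq_sqrt hp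
  have b := Real.sq_sqrt hq
  have c := Real.sq_sqrt (sub_nonneg.2 hp1)
  have d := Real.sq_sqrt (sub_nonneg.2 hq1)
  nlinarith [sq_nonneg (Real.sqrt (1 - p) - Real.sqrt (1 - q))]

lemma bc_bound {n k : ℕ} {p q : ℝ} (hp : 0 ≤ p) (hp1 : p ≤ 1) (hq : 0 ≤ q) (hq1 : q ≤ 1)
    (σ τ : Fin n → Bool) :
    ∑ E : KSet n k → Bool, Real.sqrt (hypProb p q σ E) * Real.sqrt (hypProb p q τ E) ≤
    Real.exp (-((Real.sqrt p - Real.sqrt q) ^ 2 / 2) *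
      ((Finset.univ.filter (fun e : KSet n k => ¬ (inCluster σ e.1 ↔ inCluster τ e.1))).card : ℝ)) := by
  have hs := edgeP_mem hp hp1 hq hq1 σ
  have ht := edgeP_mem hp hp1 hq hq1 τ
  set g : (e : KSet n k) → Bool → ℝ := fun e b =>
    Real.sqrt (if b then edgeP p q σ e.1 else 1 - edgeP p q σ e.1) *
    Real.sqrt (if b then edgeP p q τ e.1 else 1 - edgeP p q τ e.1) with hg
  have h1 : ∀ E : KSet n k → Bool,
      Real.sqrt (hypProb p q σ E) * Real.sqrt (hypProb p q τ E) = ∏ e, g e (E e) := by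
    intro E
    unfold hypProb
    rw [Real.sqrt_prod, Real.sqrt_prod, ← Finset.prod_mul_distrib]
    · intro e _
      split_ifs <;> linarith [(ht e.1).1, (ht e.1).2]
    · intro e _
      split_ifs <;> linarith [(hs e.1).1, (hs e.1).2]
  simp_rw [h1]
  rw [← Fintype.prod_sum]
  have h2 : ∀ e : KSet n k, ∑ b, g e b ≤
      if ¬ (inCluster σ e.1 ↔ inCluster τ e.1) then
        Real.exp (-((Real.sqrt p - Real.sqrt q) ^ 2 / 2)) else 1 := by
    intro e
    rw [Fintype.sum_bool]
    simp only [hg, if_true]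
    simp only [Bool.false_eq_true, if_false]
    have hbc := bc_one hp hp1 hq hq1
    have pp := Real.mul_self_sqrt hp
    have qq := Real.mul_self_sqrt hq
    have pp' := Real.mul_self_sqrt (sub_nonneg.2 hp1)
    have qq' := Real.mul_self_sqrt (sub_nonneg.2 hq1)
    unfold edgeP
    by_cases a : inCluster σ e.1 <;> by_cases b : inCluster τ e.1
    · simp only [if_pos a, if_pos b]
      rw [if_neg (by tauto)]; linarith
    · simp only [if_pos a, if_neg b]
      rw [if_pos (by tauto)]; linarith
    · simp only [if_neg a, if_pos b]
      rw [if_pos (by tauto)]; linarith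
    · simp only [if_neg a, if_neg b]
      rw [if_neg (by tauto)]; linarith
  refine (Finset.prod_le_prod (fun e _ => ?_) (fun e _ => h2 e)).trans ?_
  · apply Finset.sum_nonneg
    intro b _
    simp only [hg]
    positivity
  · rw [← Finset.prod_filter, Finset.prod_const, ← Real.exp_nat_mul]
    apply le_of_eq
    congr 1
    ring

/-- the admissible competitors -/
noncomputable def comp {m : ℕ} (σ : Fin (2 * m) → Bool) : Finset (Fin (2 * m) → Bool) :=
  Finset.univ.filter (fun τ => balanced τ ∧ 1 ≤ jd σ τ ∧ 2 * jd σ τ ≤ m)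

lemma fail_fixed {m k : ℕ} {p q : ℝ} (hp : 0 ≤ p) (hp1 : p ≤ 1) (hq : 0 ≤ q) (hq1 : q ≤ 1)
    (est : (KSet (2 * m) k → Bool) → (Fin (2 * m) → Bool)) (he : isMLE p q est)
    {σ : Fin (2 * m) → Bool} (hσ : balanced σ) :
    ∑ E : KSet (2 * m) k → Bool, hypProb p q σ E * (if est E ≠ σ ∧ est E ≠ negB σ then 1 else 0)
    ≤ ∑ τ ∈ comp σ, ∑ E : KSet (2 * m) k → Bool,
      Real.sqrt (hypProb p q σ E) * Real.sqrt (hypProb p q τ E) := by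
  rw [Finset.sum_comm]
  apply Finset.sum_le_sum
  intro E _
  have hnn := hypProb_nonneg hp hp1 hq hq1 σ E
  split_ifs with h
  · obtain ⟨hb, hmax⟩ := he E
    have hex : ∃ τ ∈ comp σ, hypProb p q σ E ≤ hypProb p q τ E := by
      have hj := jd_neg (τ := est E) hσ
      by_cases hc : 2 * jd σ (est E) ≤ m
      · refine ⟨est E, ?_, hmax σ hσ⟩
        simp only [comp, Finset.mem_filter, Finset.mem_univ, true_and]
        exact ⟨hb, jd_pos hσ hb h.1, hc⟩
      · refine ⟨negB (est E), ?_, by rw [hypProb_neg]; exact hmax σ hσ⟩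
        simp only [comp, Finset.mem_filter, Finset.mem_univ, true_and]
        refine ⟨bal_neg hb, jd_pos hσ (bal_neg hb) ?_, by omega⟩
        intro hh
        apply h.2
        rw [← hh]
        funext i
        simp [negB]
    obtain ⟨τ, hτ, hle⟩ := hex
    refine le_trans ?_ (Finset.single_le_sum (f := fun τ => Real.sqrt (hypProb p q σ E) *
      Real.sqrt (hypProb p q τ E)) (fun _ _ => by positivity) hτ)
    calc hypProb p q σ E * 1 = Real.sqrt (hypProb p q σ E) * Real.sqrt (hypProb p q σ E) := by
          rw [Real.mul_self_sqrt hnn, mul_one]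
      _ ≤ _ := by
        apply mul_le_mul_of_nonneg_left (Real.sqrt_le_sqrt hle) (Real.sqrt_nonneg _)
  · rw [mul_zero]
    exact Finset.sum_nonneg (fun _ _ => by positivity)

lemma prEvent_le {n k : ℕ} {p q : ℝ} (P : (Fin n → Bool) → (KSet n k → Bool) → Prop) (B : ℝ)
    (hB : 0 ≤ B)
    (h : ∀ σ, balanced σ → ∑ E : KSet n k → Bool, hypProb p q σ E * (if P σ E then 1 else 0) ≤ B) :
    prEvent n k p q P ≤ B := by
  unfold prEvent
  set N := ((Finset.univ.filter (fun τ : Fin n → Bool => balanced τ)).card : ℝ) with hN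
  calc _ ≤ ∑ σ : Fin n → Bool, (if balanced σ then (1 / N) * B else 0) := by
        apply Finset.sum_le_sum
        intro σ _
        unfold sigProb
        split_ifs with hb
        · simp_rw [mul_assoc]
          rw [← Finset.mul_sum]
          apply mul_le_mul_of_nonneg_left (h σ hb)
          positivity
        · simp
    _ = N * (1 / N * B) := by
        rw [← Finset.sum_filter, Finset.sum_const, nsmul_eq_mul]
    _ ≤ B := by
        by_cases h0 : N = 0
        · rw [h0]; simpa using hB
        · apply le_of_eq; field_simp

lemma prEvent_nonneg {n k : ℕ} {p q : ℝ} (hp : 0 ≤ p) (hp1 : p ≤ 1) (hq : 0 ≤ q) (hq1 : q ≤ 1)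
    (P : (Fin n → Bool) → (KSet n k → Bool) → Prop) : 0 ≤ prEvent n k p q P := by
  unfold prEvent
  apply Finset.sum_nonneg; intro σ _
  apply Finset.sum_nonneg; intro E _
  have := hypProb_nonneg hp hp1 hq hq1 σ E
  have h2 : 0 ≤ sigProb n σ := by unfold sigProb; split_ifs <;> positivity
  split_ifs <;> positivity

/-- sum over competitors grouped by distance -/
lemma comp_sum_le {m : ℕ} {σ : Fin (2 * m) → Bool} (hσ : balanced σ) (f : ℕ → ℝ)
    (hf : ∀ j, 0 ≤ f j) :
    ∑ τ ∈ comp σ, f (jd σ τ) ≤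
      ∑ j ∈ Finset.Icc 1 (m / 2), ((m.choose j : ℝ) * m.choose j) * f j := by
  have hmap : ∀ τ ∈ comp σ, jd σ τ ∈ Finset.Icc 1 (m / 2) := by
    intro τ hτ
    simp only [comp, Finset.mem_filter, Finset.mem_univ, true_and] at hτ
    rw [Finset.mem_Icc]; omega
  rw [← Finset.sum_fiberwise_of_maps_to hmap]
  apply Finset.sum_le_sum
  intro j _
  calc _ = ∑ τ ∈ comp σ with jd σ τ = j, f j := by
        apply Finset.sum_congr rfl
        intro τ hτ
        rw [(Finset.mem_filter.1 hτ).2]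
    _ = ((comp σ).filter (fun τ => jd σ τ = j)).card * f j := by
        rw [Finset.sum_const, nsmul_eq_mul]
    _ ≤ _ := by
        apply mul_le_mul_of_nonneg_right _ (hf j)
        have h1 := count_le hσ j
        have h2 : ((comp σ).filter (fun τ => jd σ τ = j)).card ≤
          (Finset.univ.filter (fun τ : Fin (2 * m) → Bool => balanced τ ∧ jd σ τ = j)).card := by
          apply Finset.card_le_card
          intro τ
          simp only [comp, Finset.mem_filter, Finset.mem_univ, true_and]
          tauto
        exact_mod_cast h2.trans h1

/-- combined bound -/
lemma main_bound {m k : ℕ} (hk : 1 ≤ k) {p q : ℝ} (hp : 0 ≤ p) (hp1 : p ≤ 1) (hq : 0 ≤ q)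
    (hq1 : q ≤ 1)
    (est : (KSet (2 * m) k → Bool) → (Fin (2 * m) → Bool)) (he : isMLE p q est) :
    prEvent (2 * m) k p q (fun σ E => est E ≠ σ ∧ est E ≠ negB σ) ≤
    ∑ j ∈ Finset.Icc 1 (m / 2), ((m.choose j : ℝ) * m.choose j) *
      Real.exp (-(2 * (Real.sqrt p - Real.sqrt q) ^ 2) *
        ((m.choose k : ℝ) - (m - j).choose k - j.choose k)) := by
  apply prEvent_le
  · exact Finset.sum_nonneg (fun _ _ => by positivity)
  intro σ hσ
  have ff := fail_fixed hp hp1 hq hq1 est he hσ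
  refine le_trans (le_of_eq ?_) (ff.trans ?_)
  · apply Finset.sum_congr rfl
    intro E _
    congr
  refine le_trans ?_ (comp_sum_le hσ (fun j => Real.exp (-(2 * (Real.sqrt p - Real.sqrt q) ^ 2) *
        ((m.choose k : ℝ) - (m - j).choose k - j.choose k))) (fun _ => by positivity))
  apply Finset.sum_le_sum
  intro τ hτ
  have hb : balanced τ := by
    simp only [comp, Finset.mem_filter, Finset.mem_univ, true_and] at hτ
    exact hτ.1
  refine (bc_bound hp hp1 hq hq1 σ τ).trans ?_
  apply Real.exp_le_exp.2
  have := diff_count hk hσ hb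
  nlinarith [mul_le_mul_of_nonneg_left this (sq_nonneg (Real.sqrt p - Real.sqrt q))]

lemma choose_step (a r j : ℕ) : j * a.choose r + a.choose (r + 1) ≤ (a + j).choose (r + 1) := by
  induction j with
  | zero => simp
  | succ j ih =>
    rw [← add_assoc, Nat.choose_succ_succ]
    have := Nat.choose_le_choose r (Nat.le_add_right a j)
    nlinarith

lemma choose_succ_bd (j r : ℕ) : j.choose (r + 1) * (r + 1) ≤ j * j.choose r := by
  rw [Nat.choose_succ_right_eq, mul_comm]
  exact Nat.mul_le_mul_right _ (Nat.sub_le _ _)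

lemma choose_lin (b r : ℕ) (hr : 1 ≤ r) : b + 1 ≤ (b + r).choose r := by
  obtain ⟨s, rfl⟩ : ∃ s, r = s + 1 := ⟨r - 1, by omega⟩
  induction b with
  | zero => simp
  | succ b ih =>
    have : b + 1 + (s + 1) = (b + (s + 1)) + 1 := by ring
    rw [this, Nat.choose_succ_succ, Nat.succ_eq_add_one]
    have : 0 < (b + (s + 1)).choose s := Nat.choose_pos (by omega)
    have := ih
    omega

lemma N_le (m r : ℕ) : (((2 * m - 1).choose r : ℕ) : ℝ) ≤ 2 ^ r * ((m : ℝ) ^ r / (r.factorial : ℝ)) := by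
  have h1 : ((2 * m - 1).choose r : ℝ) ≤ ((2 * m).choose r : ℝ) := by
    exact_mod_cast Nat.choose_le_choose r (Nat.sub_le _ _)
  have h2 := Nat.choose_le_pow_div (α := ℝ) r (2 * m)
  refine h1.trans (h2.trans (le_of_eq ?_))
  push_cast
  rw [mul_pow]; ring

lemma choose_lower (a r : ℕ) (y : ℝ) (hy : 0 ≤ y) (h : y + r ≤ a) :
    y ^ r / (r.factorial : ℝ) ≤ (a.choose r : ℝ) := by
  refine le_trans ?_ (Nat.pow_le_choose (α := ℝ) r a)
  have hra : r ≤ a := by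
    have : (r : ℝ) ≤ a := by linarith
    exact_mod_cast this
  have : y ≤ ((a + 1 - r : ℕ) : ℝ) := by
    rw [Nat.cast_sub (by omega)]; push_cast; linarith
  gcongr

lemma W_base {m r j : ℕ} (hj : j ≤ m) :
    (j : ℝ) * ((m - j).choose r : ℝ) ≤ (m.choose (r + 1) : ℝ) - (m - j).choose (r + 1) := by
  have h := choose_step (m - j) r j
  rw [Nat.sub_add_cancel hj] at h
  have h' : (j : ℝ) * ((m - j).choose r : ℝ) + (m - j).choose (r + 1) ≤ m.choose (r + 1) := by
    exact_mod_cast h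
  linarith

lemma W_small {m r j : ℕ} {δ : ℝ} (hδ : 0 ≤ δ) (hδ2 : 2 * δ ≤ 1) (hj : (j : ℝ) ≤ δ * m)
    (hr : (r : ℝ) ≤ δ * m) (hκ : 0 ≤ (1 - 2 * δ) ^ r - δ ^ r) :
    (j : ℝ) * ((1 - 2 * δ) ^ r - δ ^ r) / 2 ^ r * ((2 * m - 1).choose r : ℝ) ≤
      (m.choose (r + 1) : ℝ) - (m - j).choose (r + 1) - j.choose (r + 1) := by
  have hm0 : (0 : ℝ) ≤ m := Nat.cast_nonneg m
  have hjm : j ≤ m := by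
    have : (j : ℝ) ≤ m := by nlinarith
    exact_mod_cast this
  have h1 := W_base (r := r) hjm
  have h2 : ((j.choose (r + 1) : ℕ) : ℝ) ≤ j * j.choose r := by
    have a := choose_succ_bd j r
    have b : j.choose (r + 1) ≤ j.choose (r + 1) * (r + 1) := Nat.le_mul_of_pos_right _ (by omega)
    exact_mod_cast b.trans a
  have h3 : ((1 - 2 * δ) * m) ^ r / (r.factorial : ℝ) ≤ ((m - j).choose r : ℝ) := by
    apply choose_lower
    · apply mul_nonneg _ hm0; linarith
    · rw [Nat.cast_sub hjm]; linarith
  have h4 : (j.choose r : ℝ) ≤ (δ * m) ^ r / (r.factorial : ℝ) := by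
    refine (Nat.choose_le_pow_div (α := ℝ) r j).trans ?_
    gcongr
  have hN := N_le m r
  have hj0 : (0 : ℝ) ≤ j := Nat.cast_nonneg j
  rw [mul_pow] at h3 h4
  set Q := (m : ℝ) ^ r / (r.factorial : ℝ) with hQ
  set κ := (1 - 2 * δ) ^ r - δ ^ r with hκd
  calc (j : ℝ) * κ / 2 ^ r * ((2 * m - 1).choose r : ℝ) ≤ (j : ℝ) * κ / 2 ^ r * (2 ^ r * Q) := by
        gcongr
    _ = j * (κ * Q) := by field_simp
    _ ≤ j * (((m - j).choose r : ℝ) - j.choose r) := by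
        apply mul_le_mul_of_nonneg_left _ hj0
        have e1 : κ * Q = (1 - 2 * δ) ^ r * m ^ r / (r.factorial : ℝ) -
          δ ^ r * m ^ r / (r.factorial : ℝ) := by rw [hκd, hQ]; ring
        linarith
    _ ≤ _ := by nlinarith

lemma W_large {m r j : ℕ} (hr1 : 1 ≤ r) (hj : 2 * j ≤ m) (hr : 4 * r ≤ m) :
    (j : ℝ) * (1 / (2 * 8 ^ r)) * ((2 * m - 1).choose r : ℝ) ≤
      (m.choose (r + 1) : ℝ) - (m - j).choose (r + 1) - j.choose (r + 1) := by
  have hm0 : (0 : ℝ) ≤ m := Nat.cast_nonneg m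
  have hjm : j ≤ m := by omega
  have h1 := W_base (r := r) hjm
  have hj0 : (0 : ℝ) ≤ j := Nat.cast_nonneg j
  have h2 : ((j.choose (r + 1) : ℕ) : ℝ) * 2 ≤ j * (m - j).choose r := by
    have a := choose_succ_bd j r
    have b : j.choose (r + 1) * 2 ≤ j.choose (r + 1) * (r + 1) :=
      Nat.mul_le_mul_left _ (by omega)
    have c : j * j.choose r ≤ j * (m - j).choose r :=
      Nat.mul_le_mul_left _ (Nat.choose_le_choose r (by omega))
    exact_mod_cast (b.trans a).trans c
  have h3 : ((m : ℝ) / 4) ^ r / (r.factorial : ℝ) ≤ ((m - j).choose r : ℝ) := by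
    apply choose_lower
    · positivity
    · rw [Nat.cast_sub hjm]
      have a : (2 : ℝ) * j ≤ m := by exact_mod_cast hj
      have b : (4 : ℝ) * r ≤ m := by exact_mod_cast hr
      linarith
  have hN := N_le m r
  have h5 : (1 / 8 ^ r : ℝ) * ((2 * m - 1).choose r : ℝ) ≤ ((m - j).choose r : ℝ) := by
    refine le_trans ?_ h3
    calc _ ≤ (1 / 8 ^ r : ℝ) * (2 ^ r * ((m : ℝ) ^ r / (r.factorial : ℝ))) := by gcongr
      _ = _ := by
        rw [div_pow, show (8 : ℝ) = 2 * 4 by norm_num, mul_pow]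
        field_simp
  calc _ = (j / 2 : ℝ) * ((1 / 8 ^ r : ℝ) * ((2 * m - 1).choose r : ℝ)) := by
        field_simp
    _ ≤ (j / 2 : ℝ) * ((m - j).choose r : ℝ) := by gcongr
    _ ≤ _ := by linarith

lemma sum_bound {m r : ℕ} (hr1 : 1 ≤ r) {G I L δ : ℝ} (hG : 0 < G) (hI : 1 < I)
    (hGI : G = I * 2 ^ r) (hL : 0 ≤ L) (hmL : (m : ℝ) ≤ Real.exp L)
    (hδ : 0 < δ) (hδ2 : 2 * δ ≤ 1)
    (hκ : (I + 1) / (2 * I) ≤ (1 - 2 * δ) ^ r - δ ^ r)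
    (hr : (r : ℝ) ≤ δ * m) (hr4 : 4 * r ≤ m)
    (hbig : 2 / δ ≤ G * (1 / (2 * 8 ^ r)) * L)
    (hJ : I ≤ G * (1 / (2 * 8 ^ r)) * (δ * m))
    (hy : Real.exp (-(I - 1) / 2 * L) ≤ 1 / 3) :
    ∑ j ∈ Finset.Icc 1 (m / 2), ((m.choose j : ℝ) * m.choose j) *
      Real.exp (-(2 * (G * L / ((2 * m - 1).choose r : ℝ))) *
        ((m.choose (r + 1) : ℝ) - (m - j).choose (r + 1) - j.choose (r + 1))) ≤
      Real.exp (-(I - 1) / 2 * L) := by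
  set y := Real.exp (-(I - 1) / 2 * L) with hyd
  have hy0 : 0 < y := Real.exp_pos _
  have hx : Real.exp (-(I - 1) * L) = y ^ 2 := by
    rw [hyd, ← Real.exp_nat_mul]; congr 1; push_cast; ring
  set c : ℝ := 1 / (2 * 8 ^ r) with hc
  have hc0 : 0 < c := by positivity
  have hm0 : (0 : ℝ) ≤ m := Nat.cast_nonneg m
  have hNpos : (0 : ℝ) < ((2 * m - 1).choose r : ℝ) := by
    have : 0 < (2 * m - 1).choose r := Nat.choose_pos (by omega)
    exact_mod_cast this
  set N : ℝ := ((2 * m - 1).choose r : ℝ) with hN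
  have hterm : ∀ j ∈ Finset.Icc 1 (m / 2), ((m.choose j : ℝ) * m.choose j) *
      Real.exp (-(2 * (G * L / N)) *
        ((m.choose (r + 1) : ℝ) - (m - j).choose (r + 1) - j.choose (r + 1))) ≤
      (y ^ 2) ^ j + Real.exp (-I * L) := by
    intro j hj
    rw [Finset.mem_Icc] at hj
    have hj1 : (1 : ℝ) ≤ j := by exact_mod_cast hj.1
    by_cases hjs : (j : ℝ) ≤ δ * m
    · have hκ0 : 0 ≤ (1 - 2 * δ) ^ r - δ ^ r := le_trans (by positivity) hκ
      have hW := W_small hδ.le hδ2 hjs hr hκ0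
      have hexp : -(2 * (G * L / N)) *
        ((m.choose (r + 1) : ℝ) - (m - j).choose (r + 1) - j.choose (r + 1)) ≤
          -((I + 1) * L * j) := by
        have h1 := mul_le_mul_of_nonneg_left hW (show 0 ≤ 2 * (G * L / N) by positivity)
        have h2 : 2 * (G * L / N) * ((j : ℝ) * ((1 - 2 * δ) ^ r - δ ^ r) / 2 ^ r * N) =
          2 * I * ((1 - 2 * δ) ^ r - δ ^ r) * (L * j) := by
          rw [hGI]; field_simp
        have h3 : (I + 1) ≤ 2 * I * ((1 - 2 * δ) ^ r - δ ^ r) := by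
          rw [div_le_iff₀ (by linarith)] at hκ; linarith
        have h4 := mul_le_mul_of_nonneg_right h3 (show 0 ≤ L * j by positivity)
        rw [h2] at h1
        linarith
      have hch : (m.choose j : ℝ) ≤ Real.exp (L * j) := by
        calc (m.choose j : ℝ) ≤ (m : ℝ) ^ j := by exact_mod_cast Nat.choose_le_pow m j
          _ ≤ Real.exp L ^ j := by gcongr
          _ = _ := by rw [← Real.exp_nat_mul, mul_comm]
      calc _ ≤ (Real.exp (L * j) * Real.exp (L * j)) * Real.exp (-((I + 1) * L * j)) := by
            gcongr
        _ = (y ^ 2) ^ j := by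
            rw [← hx, ← Real.exp_nat_mul, ← Real.exp_add, ← Real.exp_add]; congr 1; ring
        _ ≤ _ := by linarith [Real.exp_pos (-I * L)]
    · push Not at hjs
      have hW := W_large (j := j) hr1 (by omega) hr4
      have hexp : -(2 * (G * L / N)) *
        ((m.choose (r + 1) : ℝ) - (m - j).choose (r + 1) - j.choose (r + 1)) ≤
          -(2 * (G * c * L) * j) := by
        have h1 := mul_le_mul_of_nonneg_left hW (show 0 ≤ 2 * (G * L / N) by positivity)
        have h2 : 2 * (G * L / N) * ((j : ℝ) * c * N) = 2 * (G * c * L) * j := by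
          field_simp
        have h3 : 2 * (G * L / N) * ((j : ℝ) * c * N) ≤ 2 * (G * L / N) *
          ((m.choose (r + 1) : ℝ) - (m - j).choose (r + 1) - j.choose (r + 1)) := h1
        rw [h2] at h3
        linarith
      have hmj : (m : ℝ) ≤ j / δ := by
        rw [le_div_iff₀ hδ]; linarith
      have hch : (m.choose j : ℝ) ≤ Real.exp (j / δ) := by
        calc (m.choose j : ℝ) ≤ (2 : ℝ) ^ m := by exact_mod_cast Nat.choose_le_two_pow m j
          _ ≤ Real.exp 1 ^ m := by
            gcongr
            linarith [Real.add_one_le_exp (1 : ℝ)]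
          _ = Real.exp m := by rw [← Real.exp_nat_mul, mul_one]
          _ ≤ _ := Real.exp_le_exp.2 hmj
      calc _ ≤ (Real.exp (j / δ) * Real.exp (j / δ)) * Real.exp (-(2 * (G * c * L) * j)) := by
            gcongr
        _ = Real.exp (j * (2 / δ) - 2 * (G * c * L) * j) := by
            rw [← Real.exp_add, ← Real.exp_add]; congr 1; ring
        _ ≤ Real.exp (-I * L) := by
            apply Real.exp_le_exp.2
            have h1 := mul_le_mul_of_nonneg_left hbig (show (0 : ℝ) ≤ j by positivity)
            have h2 : I ≤ G * c * j := by
              refine hJ.trans ?_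
              gcongr
            have h3 := mul_le_mul_of_nonneg_right h2 hL
            nlinarith
        _ ≤ _ := by
            have : 0 ≤ (y ^ 2) ^ j := by positivity
            linarith
  refine (Finset.sum_le_sum hterm).trans ?_
  rw [Finset.sum_add_distrib, Finset.sum_const, nsmul_eq_mul]
  have hyy : y ^ 2 ≤ 1 / 2 := by nlinarith
  have hgeo : ∑ j ∈ Finset.Icc 1 (m / 2), (y ^ 2) ^ j ≤ 2 * y ^ 2 := by
    have h := geom_sum_Ico_le_of_lt_one (m := 1) (n := m / 2 + 1) (x := y ^ 2) (by positivity)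
      (by linarith)
    have e : Finset.Icc 1 (m / 2) = Finset.Ico 1 (m / 2 + 1) := by
      ext; simp only [Finset.mem_Icc, Finset.mem_Ico]; omega
    rw [e]
    refine h.trans ?_
    rw [pow_one, div_le_iff₀ (by linarith)]
    nlinarith [sq_nonneg y]
  have hcnt : ((Finset.Icc 1 (m / 2)).card : ℝ) * Real.exp (-I * L) ≤ y ^ 2 := by
    have h1 : ((Finset.Icc 1 (m / 2)).card : ℝ) ≤ m := by
      have : (Finset.Icc 1 (m / 2)).card ≤ m := by simp; omega
      exact_mod_cast this
    calc _ ≤ Real.exp L * Real.exp (-I * L) := by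
          gcongr; exact h1.trans hmL
      _ = y ^ 2 := by rw [← hx, ← Real.exp_add]; congr 1; ring
  nlinarith

lemma exists_delta {r : ℕ} (hr : 1 ≤ r) {I : ℝ} (hI : 1 < I) :
    ∃ δ : ℝ, 0 < δ ∧ 2 * δ ≤ 1 ∧ (I + 1) / (2 * I) ≤ (1 - 2 * δ) ^ r - δ ^ r := by
  have hc : Continuous (fun δ : ℝ => (1 - 2 * δ) ^ r - δ ^ r) := by fun_prop
  have h0 : (I + 1) / (2 * I) < (fun δ : ℝ => (1 - 2 * δ) ^ r - δ ^ r) 0 := by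
    have : (0 : ℝ) ^ r = 0 := zero_pow (by omega)
    simp only [this]
    rw [div_lt_iff₀ (by linarith)]
    norm_num
    linarith
  have h1 := (hc.tendsto 0).eventually (lt_mem_nhds h0)
  rw [Metric.eventually_nhds_iff] at h1
  obtain ⟨η, hη, h⟩ := h1
  refine ⟨min (η / 2) (1 / 2), by positivity, by linarith [min_le_right (η / 2) (1 / 2 : ℝ)], ?_⟩
  apply le_of_lt
  apply h
  rw [Real.dist_eq, sub_zero, abs_of_pos (by positivity)]
  linarith [min_le_left (η / 2) (1 / 2 : ℝ)]

lemma pParam_sqrt {α β L N : ℝ} (hα : 0 ≤ α) (hβ : 0 ≤ β) (hL : 0 ≤ L) (hN : 0 < N) :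
    (Real.sqrt (α * L / N) - Real.sqrt (β * L / N)) ^ 2 =
      (Real.sqrt α - Real.sqrt β) ^ 2 * L / N := by
  rw [mul_div_assoc, mul_div_assoc, Real.sqrt_mul hα, Real.sqrt_mul hβ, ← sub_mul, mul_pow,
    Real.sq_sqrt (by positivity)]
  ring

lemma tendsto_two_mul : Tendsto (fun m : ℕ => ((2 * m : ℕ) : ℝ)) atTop atTop := by
  apply tendsto_natCast_atTop_atTop.comp
  exact tendsto_atTop_mono (fun m => by simp only [id]; omega) tendsto_id

lemma tendsto_log2 : Tendsto (fun m : ℕ => Real.log ((2 * m : ℕ) : ℝ)) atTop atTop :=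
  Real.tendsto_log_atTop.comp tendsto_two_mul

lemma pParam_le_one {k : ℕ} (hk : 2 ≤ k) (α : ℝ) (hα : 0 < α) :
    ∀ᶠ m : ℕ in atTop, 0 ≤ pParam k α (2 * m) ∧ pParam k α (2 * m) ≤ 1 := by
  have hlo := (Real.isLittleO_log_id_atTop.comp_tendsto tendsto_two_mul).def
    (show 0 < 1 / (2 * α) by positivity)
  filter_upwards [hlo, eventually_ge_atTop k] with m hm hmk
  have hL : 0 ≤ Real.log ((2 * m : ℕ) : ℝ) := Real.log_natCast_nonneg _
  simp only [Function.comp, id, Real.norm_eq_abs] at hm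
  rw [abs_of_nonneg hL, abs_of_nonneg (by positivity)] at hm
  unfold pParam
  refine ⟨by positivity, ?_⟩
  have hN : (m : ℝ) ≤ ((2 * m - 1).choose (k - 1) : ℝ) := by
    have := choose_lin (2 * m - 1 - (k - 1)) (k - 1) (by omega)
    rw [Nat.sub_add_cancel (by omega)] at this
    have h2 : m ≤ (2 * m - 1).choose (k - 1) := by omega
    exact_mod_cast h2
  have hm0 : (0 : ℝ) < m := by
    have : 0 < m := by omega
    exact_mod_cast this
  rw [div_le_one (by linarith)]
  refine le_trans ?_ hN
  calc _ ≤ α * (1 / (2 * α) * ((2 * m : ℕ) : ℝ)) := by gcongr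
    _ = m := by push_cast; field_simp

lemma eventually_bound (k : ℕ) (hk : 2 ≤ k) (α β : ℝ) (hα : 0 < α) (hβ : 0 < β)
    (hI : 1 < (Real.sqrt α - Real.sqrt β) ^ 2 / 2 ^ (k - 1))
    (est : (m : ℕ) → (KSet (2 * m) k → Bool) → (Fin (2 * m) → Bool))
    (he : ∀ m : ℕ, isMLE (pParam k α (2 * m)) (pParam k β (2 * m)) (est m)) :
    ∀ᶠ m : ℕ in atTop,
      0 ≤ prEvent (2 * m) k (pParam k α (2 * m)) (pParam k β (2 * m))
              (fun σ E => est m E ≠ σ ∧ est m E ≠ negB σ) ∧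
      prEvent (2 * m) k (pParam k α (2 * m)) (pParam k β (2 * m))
              (fun σ E => est m E ≠ σ ∧ est m E ≠ negB σ) ≤
      Real.exp (-(((Real.sqrt α - Real.sqrt β) ^ 2 / 2 ^ (k - 1)) - 1) / 2 *
        Real.log ((2 * m : ℕ) : ℝ)) := by
  obtain ⟨r, rfl⟩ : ∃ r, k = r + 1 := ⟨k - 1, by omega⟩
  have hr1 : 1 ≤ r := by omega
  simp only [Nat.add_sub_cancel] at hI ⊢
  set G := (Real.sqrt α - Real.sqrt β) ^ 2 with hG
  set I := G / 2 ^ r with hId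
  have hGI : G = I * 2 ^ r := by rw [hId]; field_simp
  have hG0 : 0 < G := by rw [hGI]; have : 0 < I := by linarith
                         positivity
  obtain ⟨δ, hδ, hδ2, hκ⟩ := exists_delta hr1 hI
  have hm_top : Tendsto (fun m : ℕ => (m : ℝ)) atTop atTop := tendsto_natCast_atTop_atTop
  have ev1 : ∀ᶠ m : ℕ in atTop, (r : ℝ) ≤ δ * m :=
    (hm_top.const_mul_atTop hδ).eventually_ge_atTop _
  have ev2 : ∀ᶠ m : ℕ in atTop, 2 / δ ≤ G * (1 / (2 * 8 ^ r)) * Real.log ((2 * m : ℕ) : ℝ) :=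
    (tendsto_log2.const_mul_atTop (show 0 < G * (1 / (2 * 8 ^ r)) by positivity)).eventually_ge_atTop _
  have ev3 : ∀ᶠ m : ℕ in atTop, I ≤ G * (1 / (2 * 8 ^ r)) * (δ * m) :=
    ((hm_top.const_mul_atTop hδ).const_mul_atTop
      (show 0 < G * (1 / (2 * 8 ^ r)) by positivity)).eventually_ge_atTop _
  have ev4 : ∀ᶠ m : ℕ in atTop, Real.exp (-(I - 1) / 2 * Real.log ((2 * m : ℕ) : ℝ)) ≤ 1 / 3 := by
    have h := Real.tendsto_exp_atBot.comp
      (tendsto_log2.const_mul_atTop_of_neg (show -(I - 1) / 2 < 0 by linarith))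
    exact h.eventually_le_const (by norm_num)
  filter_upwards [ev1, ev2, ev3, ev4, pParam_le_one hk α hα, pParam_le_one hk β hβ,
    eventually_ge_atTop (4 * r)] with m h1 h2 h3 h4 hp hq h5
  refine ⟨prEvent_nonneg hp.1 hp.2 hq.1 hq.2 _, ?_⟩
  refine (main_bound (by omega) hp.1 hp.2 hq.1 hq.2 (est m) (he m)).trans ?_
  have hL : 0 ≤ Real.log ((2 * m : ℕ) : ℝ) := Real.log_natCast_nonneg _
  have hNpos : (0 : ℝ) < ((2 * m - 1).choose r : ℝ) := by
    have : 0 < (2 * m - 1).choose r := Nat.choose_pos (by omega)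
    exact_mod_cast this
  have hpq : (Real.sqrt (pParam (r + 1) α (2 * m)) - Real.sqrt (pParam (r + 1) β (2 * m))) ^ 2 =
      G * Real.log ((2 * m : ℕ) : ℝ) / ((2 * m - 1).choose r : ℝ) := by
    unfold pParam
    rw [Nat.add_sub_cancel]
    exact pParam_sqrt hα.le hβ.le hL hNpos
  rw [hpq]
  have hmL : (m : ℝ) ≤ Real.exp (Real.log ((2 * m : ℕ) : ℝ)) := by
    have : 0 < 2 * m := by omega
    rw [Real.exp_log (by exact_mod_cast this)]
    push_cast
    have : (0 : ℝ) ≤ m := Nat.cast_nonneg m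
    linarith
  exact sum_bound hr1 hG0 hI hGI hL hmL hδ hδ2 hκ h1 h5 h2 h3 h4

end HSBMProof

/-- If `I(α,β) > 1` then the failure probability of the ML estimator satisfies
`p_fail ≤ n^{-(I(α,β)-1)/2 + o(1)}`; in particular `p_fail = o(1)`. -/
theorem mle_succeeds_above_threshold (k : ℕ) (hk : 2 ≤ k) (α β : ℝ) (hα : 0 < α) (hβ : 0 < β)
    (hI : 1 < (Real.sqrt α - Real.sqrt β) ^ 2 / 2 ^ (k - 1)) :
    ∀ est : (m : ℕ) → (KSet (2 * m) k → Bool) → (Fin (2 * m) → Bool),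
      (∀ m : ℕ, isMLE (pParam k α (2 * m)) (pParam k β (2 * m)) (est m)) →
      ∃ ε : ℕ → ℝ, Tendsto ε atTop (nhds 0) ∧
        (∀ m : ℕ,
          prEvent (2 * m) k (pParam k α (2 * m)) (pParam k β (2 * m))
              (fun σ E => est m E ≠ σ ∧ est m E ≠ negB σ)
            ≤ ((2 * m : ℕ) : ℝ) ^
                (-(((Real.sqrt α - Real.sqrt β) ^ 2 / 2 ^ (k - 1)) - 1) / 2 + ε m)) ∧
        Tendsto (fun m : ℕ =>
            prEvent (2 * m) k (pParam k α (2 * m)) (pParam k β (2 * m))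
              (fun σ E => est m E ≠ σ ∧ est m E ≠ negB σ))
          atTop (nhds 0) := by
  intro est he
  have hev := HSBMProof.eventually_bound k hk α β hα hβ hI est he
  set a := -(((Real.sqrt α - Real.sqrt β) ^ 2 / 2 ^ (k - 1)) - 1) / 2 with ha
  set v : ℕ → ℝ := fun m => prEvent (2 * m) k (pParam k α (2 * m)) (pParam k β (2 * m))
              (fun σ E => est m E ≠ σ ∧ est m E ≠ negB σ) with hv
  have ha0 : a < 0 := by rw [ha]; linarith
  obtain ⟨M, hM⟩ := eventually_atTop.1 hev
  have hsmall : ∀ m : ℕ, ∃ e : ℝ, v m ≤ ((2 * m : ℕ) : ℝ) ^ (a + e) := by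
    intro m
    rcases Nat.eq_zero_or_pos m with rfl | hm
    · refine ⟨-a, ?_⟩
      rw [add_neg_cancel, Real.rpow_zero]
      have : v 0 = 0 := by
        simp only [hv]
        unfold prEvent
        apply Finset.sum_eq_zero
        intro σ _
        apply Finset.sum_eq_zero
        intro E _
        have : est 0 E = σ := by
          funext i
          exact (Fin.cast (by norm_num) i : Fin 0).elim0
        rw [if_neg (by tauto), mul_zero]
      rw [this]; norm_num
    · have h1 : (1 : ℝ) < ((2 * m : ℕ) : ℝ) := by
        have : 1 < 2 * m := by omega
        exact_mod_cast this
      have ht := tendsto_rpow_atTop_of_base_gt_one _ h1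
      obtain ⟨x, hx⟩ := (ht.eventually_ge_atTop (v m)).exists
      refine ⟨x - a, ?_⟩
      rw [add_sub_cancel]
      exact hx
  choose e hesm using hsmall
  refine ⟨fun m => if m < max M 1 then e m else 0, ?_, ?_, ?_⟩
  · apply tendsto_const_nhds.congr'
    filter_upwards [eventually_ge_atTop (max M 1)] with m hm
    rw [if_neg (by omega)]
  · intro m
    by_cases hm : m < max M 1
    · simp only [if_pos hm]
      exact hesm m
    · simp only [if_neg hm]
      have hpos : (0 : ℝ) < ((2 * m : ℕ) : ℝ) := by
        have : 0 < 2 * m := by omega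
        exact_mod_cast this
      rw [add_zero, Real.rpow_def_of_pos hpos, mul_comm (Real.log _)]
      exact (hM m (by omega)).2
  · have ht := Real.tendsto_exp_atBot.comp
      (HSBMProof.tendsto_log2.const_mul_atTop_of_neg ha0)
    refine tendsto_of_tendsto_of_tendsto_of_le_of_le' tendsto_const_nhds ht ?_ ?_
    · exact hev.mono fun m h => h.1
    · exact hev.mono fun m h => h.2
end
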